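/- Let K be a number field of degree n with r₁ real places (r₁ > 0). Then the 2-rank ρ of the class group of K satisfies ρ ≥ ⌈r₁/2⌉ − sgnrk(E_K), equivalently ρ ≥ dim_{F₂}(E_K⁺/E_K²) − ⌊n/2⌋, where E_K⁺ is the group of totally positive units of K. -/

import Mathlib

open NumberField
open scoped nonZeroDivisors

variable (K : Type*) [Field K] [NumberField K]

/-- The group `E_K⁺` of totally positive units of `K`. -/
def totPosUnits : Subgroup (𝓞 K)ˣ where
  carrier := {ε : (𝓞 K)ˣ | ∀ φ : K →+* ℝ, 0 < φ (algebraMap (𝓞 K) K ε)}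
  one_mem' := fun φ => by simp
  mul_mem' := by
    intro x y hx hy φ
    rw [Units.val_mul, _root_.map_mul, _root_.map_mul]
    exact mul_pos (hx φ) (hy φ)
  inv_mem' := by
    intro x hx φ
    have h : φ (algebraMap (𝓞 K) K ↑x) * φ (algebraMap (𝓞 K) K ↑x⁻¹) = 1 := by
      rw [← _root_.map_mul, ← _root_.map_mul, Units.mul_inv, _root_.map_one, _root_.map_one]
    nlinarith [hx φ]

/-- The archimedean signature of an element of `K`: the vector of the signs of its images
under all real embeddings of `K`, recorded additively in `𝔽₂`. -/
noncomputable def sgnVec (x : K) : (K →+* ℝ) → ZMod 2 :=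
  fun φ => if 0 < φ x then 0 else 1

/-- The unit signature group `sgn_∞(E_K)`: the set of signatures of units of `K`. -/
noncomputable def unitSignatureGroup : Set ((K →+* ℝ) → ZMod 2) :=
  Set.range fun ε : (𝓞 K)ˣ => sgnVec K (algebraMap (𝓞 K) K ε)

/-!
A totally positive unit `α` twists trace forms: by Milgram's reciprocity for Gauss sums, the forms
`Tr (c x²)` and `Tr (α c x²)`, which have the same signature, have Gauss sums of the same phase.
Comparing Gauss sums with denominators prime to `2`, the quadratic symbol of `α` modulo the ideal
`(x)` is trivial when `x` is a square modulo `4`, and it is trivial for every odd `x` when `α`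
itself is a square modulo `4`.

Let `E⁺` be the group of totally positive units, `T` the subgroup of squares modulo `4`, and
`D ≥ T` the subgroup of units whose symbol vanishes on all principal odd ideals. As the symbol
modulo `(β) = (1)` is trivial for a unit `β`, the symbol pairs `E⁺ / D` with the quotient of
`(𝓞 K / 4)ˣ` by its squares and by the image of `E⁺ / T`, whence `[E⁺ : T] [E⁺ : D] ≤ 2 ^ n`. On
`D` the symbol factors through the class group, and its kernel there is the group of squares of
units: if `α` is a square modulo all odd primes, comparing the poles of the zeta functions of `K`
and `K(√α)` shows that `α` is a square. Hence `[D : E²] ≤ #Cl[2]`, so that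
`[E⁺ : E²]² ≤ 2 ^ n · #Cl[2]²`. The other inequality follows from this one by Dirichlet's unit
theorem.
-/

namespace ArmitageFrohlich

variable {K : Type*} [Field K] [NumberField K]

section GaussSum

open Complex Filter Topology

theorem ofReal_mul_cpow_half {r : ℝ} (hr : 0 < r) (z : ℂ) :
    (r * z) ^ (1 / 2 : ℂ) = √r * z ^ (1 / 2 : ℂ) := by
  rcases eq_or_ne z 0 with rfl | hz
  · simp
  have hr' : (r : ℂ) ≠ 0 := mod_cast hr.ne'
  have hsqrt : ((√r : ℝ) : ℂ) = (r : ℂ) ^ (1 / 2 : ℂ) := by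
    rw [Real.sqrt_eq_rpow, ofReal_cpow hr.le]
    norm_num
  rw [hsqrt, cpow_def_of_ne_zero (mul_ne_zero hr' hz), cpow_def_of_ne_zero hr',
    cpow_def_of_ne_zero hz, log_ofReal_mul hr hz, ofReal_log hr.le, ← exp_add]
  ring_nf

theorem jacobiTheta_eq_inv_cpow_mul (τ : ℂ) :
    jacobiTheta τ = 1 / (-I * τ) ^ (1 / 2 : ℂ) * jacobiTheta (-1 / τ) := by
  simpa [jacobiTheta_eq_jacobiTheta₂] using jacobiTheta₂_functional_equation 0 τ

theorem jacobiTheta_add_two_mul_nat (τ : ℂ) (k : ℕ) :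
    jacobiTheta (τ + 2 * k) = jacobiTheta τ := by
  induction k with
  | zero => simp
  | succ k ih =>
    rw [← ih, ← jacobiTheta_two_add (τ + 2 * k)]
    push_cast
    ring_nf

theorem tendsto_jacobiTheta_im_atTop :
    Tendsto jacobiTheta (comap im atTop) (𝓝 1) := by
  have hexp : Tendsto (fun τ : ℂ => Real.exp (-Real.pi * τ.im)) (comap im atTop) (𝓝 0) :=
    Real.tendsto_exp_atBot.comp
      (tendsto_comap.const_mul_atTop_of_neg (neg_lt_zero.2 Real.pi_pos))
  simpa using (isBigO_at_im_infty_jacobiTheta_sub_one.trans_tendsto hexp).add_const 1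

/- The element of the theta group carrying the cusp `1 / (2a)` to `∞` is `S T^(2a) S`,
whence two applications of the inversion formula. -/
theorem sqrt_mul_jacobiTheta_near_cusp {a : ℕ} (ha : 0 < a) {t : ℝ} (ht : 0 < t) :
    √t * jacobiTheta ((1 + t * I) / (2 * a)) =
      1 / (t - I) ^ (1 / 2 : ℂ) * (1 / (1 / (1 + t * I)) ^ (1 / 2 : ℂ)) *
        jacobiTheta ((I / t - 1) / (2 * a)) := by
  have ha' : (0 : ℝ) < 2 * a := by positivity
  have haC : (a : ℂ) ≠ 0 := mod_cast ha.ne'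
  have htC : (t : ℂ) ≠ 0 := mod_cast ht.ne'
  have hne : 1 + t * I ≠ 0 := fun h => by simpa using congrArg re h
  set w : ℂ := 2 * a * (t * I) / (1 + t * I) with hw
  have inversion_τ := jacobiTheta_eq_inv_cpow_mul ((1 + t * I) / (2 * a))
  have inversion_w := jacobiTheta_eq_inv_cpow_mul w
  have factor_τ : -I * ((1 + t * I) / (2 * a)) = ((2 * a : ℝ)⁻¹ : ℝ) * (t - I) := by
    push_cast
    field_simp
    linear_combination -t * I_sq
  have factor_w : -I * w = (2 * a * t : ℝ) * (1 / (1 + t * I)) := by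
    rw [hw]
    push_cast
    field_simp
    linear_combination -(1 / (1 + t * I)) * I_sq
  have translate_w : -1 / ((1 + t * I) / (2 * a)) + 2 * a = w := by
    rw [hw]
    field_simp
    ring
  have inverse_w : -1 / w = (I / t - 1) / (2 * a) := by
    rw [hw]
    field_simp
    linear_combination -I_sq
  rw [factor_τ, ofReal_mul_cpow_half (by positivity), ← jacobiTheta_add_two_mul_nat (-1 / _) a,
    translate_w] at inversion_τ
  rw [factor_w, ofReal_mul_cpow_half (by positivity), inverse_w] at inversion_w
  rw [inversion_τ, inversion_w, Real.sqrt_mul ha'.le, Real.sqrt_inv]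
  have hsqrt_a : ((√(2 * a) : ℝ) : ℂ) ≠ 0 := mod_cast (Real.sqrt_pos.2 ha').ne'
  have hsqrt_t : ((√t : ℝ) : ℂ) ≠ 0 := mod_cast (Real.sqrt_pos.2 ht).ne'
  push_cast
  field_simp

theorem tendsto_sqrt_mul_jacobiTheta_near_cusp {a : ℕ} (ha : 0 < a) :
    Tendsto (fun t : ℝ => √t * jacobiTheta ((1 + t * I) / (2 * a))) (𝓝[>] 0)
      (𝓝 (1 / (-I) ^ (1 / 2 : ℂ))) := by
  have hnear_infty : Tendsto (fun t : ℝ => jacobiTheta ((I / t - 1) / (2 * a))) (𝓝[>] 0) (𝓝 1) := by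
    refine tendsto_jacobiTheta_im_atTop.comp (tendsto_comap_iff.2 ?_)
    have him : ∀ t : ℝ, (((I / t - 1) / (2 * a) : ℂ)).im = (2 * a : ℝ)⁻¹ * t⁻¹ := fun t => by
      rw [show ((I / t - 1) / (2 * a) : ℂ) = (I / t - 1) / (2 * a : ℝ) by push_cast; rfl,
        div_ofReal_im, sub_im, div_ofReal_im]
      simp [div_eq_inv_mul]
    simpa only [Function.comp_def, him] using
      tendsto_inv_nhdsGT_zero.const_mul_atTop (by positivity : (0 : ℝ) < (2 * a : ℝ)⁻¹)
  have hcont : ContinuousAt (fun t : ℝ =>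
      1 / (t - I) ^ (1 / 2 : ℂ) * (1 / (1 / (1 + t * I)) ^ (1 / 2 : ℂ))) 0 := by
    have hsplit : (((0 : ℝ) : ℂ) - I) ∈ slitPlane := Or.inr (by simp)
    have hsplit' : (1 / (1 + ((0 : ℝ) : ℂ) * I)) ∈ slitPlane := Or.inl (by simp)
    refine .mul (.div₀ continuousAt_const (.cpow (by fun_prop) continuousAt_const hsplit) ?_)
      (.div₀ continuousAt_const (.cpow (.div₀ (by fun_prop) (by fun_prop) ?_)
        continuousAt_const hsplit') ?_) <;> simp [cpow_eq_zero_iff]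
  have hlim := (hcont.tendsto.mono_left nhdsWithin_le_nhds).mul hnear_infty
  simp only [ofReal_zero, zero_sub, zero_mul, add_zero, div_one, one_cpow, mul_one] at hlim
  refine hlim.congr' ?_
  filter_upwards [self_mem_nhdsWithin] with t ht
  exact (sqrt_mul_jacobiTheta_near_cusp ha ht).symm

theorem jacobiTheta_eq_sum_evenKernel {a : ℕ} (ha : 0 < a) {t : ℝ} (ht : 0 < t) :
    jacobiTheta ((1 + t * I) / (2 * a)) =
      ∑ k : Fin (2 * a), exp (2 * Real.pi * I * (k ^ 2 / (4 * a) : ℂ)) *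
        (HurwitzZeta.evenKernel ((k / (2 * a) : ℝ) : UnitAddCircle) (2 * a * t) : ℂ) := by
  have : NeZero (2 * a) := ⟨by omega⟩
  have haC : (a : ℂ) ≠ 0 := mod_cast ha.ne'
  have him : 0 < ((1 + t * I) / (2 * a)).im := by
    rw [show ((1 + t * I) / (2 * a) : ℂ) = (1 + t * I) / (2 * a : ℝ) by push_cast; rfl,
      div_ofReal_im]
    simpa using by positivity
  have htheta := hasSum_jacobiTheta₂_term 0 him
  rw [← jacobiTheta_eq_jacobiTheta₂, ← (Int.divModEquiv (2 * a)).symm.hasSum_iff,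
    ← (Equiv.prodComm (Fin (2 * a)) ℤ).hasSum_iff] at htheta
  refine (htheta.prod_fiberwise fun k => ?_).unique (hasSum_fintype _)
  have hkernel := HurwitzZeta.hasSum_int_evenKernel (k / (2 * a)) (t := 2 * a * t) (by positivity)
  rw [← hasSum_ofReal] at hkernel
  refine (hkernel.mul_left (exp (2 * Real.pi * I * (k ^ 2 / (4 * a) : ℂ)))).congr_fun fun q => ?_
  simp only [Function.comp_apply, Equiv.prodComm_apply, Prod.swap_prod_mk,
    Int.divModEquiv_symm_apply, jacobiTheta₂_term]
  push_cast
  rw [← exp_add, exp_eq_exp_iff_exists_int]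
  refine ⟨q * k + a * q ^ 2, ?_⟩
  push_cast
  field_simp
  ring_nf
  simp only [I_sq]
  ring

theorem tendsto_sqrt_mul_evenKernel {c : ℝ} (hc : 0 < c) (z : UnitAddCircle) :
    Tendsto (fun t => √t * HurwitzZeta.evenKernel z (c * t)) (𝓝[>] 0) (𝓝 (1 / √c)) := by
  have hcos : Tendsto (HurwitzZeta.cosKernel z) atTop (𝓝 1) := by
    obtain ⟨p, hp, hO⟩ := HurwitzZeta.isBigO_atTop_cosKernel_sub z
    have hexp : Tendsto (fun x : ℝ => Real.exp (-p * x)) atTop (𝓝 0) :=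
      Real.tendsto_exp_atBot.comp (tendsto_id.const_mul_atTop_of_neg (neg_lt_zero.2 hp))
    simpa using (hO.trans_tendsto hexp).add_const 1
  have hinv : Tendsto (fun t => c⁻¹ * t⁻¹) (𝓝[>] 0) atTop :=
    tendsto_inv_nhdsGT_zero.const_mul_atTop (inv_pos.2 hc)
  have hlim := (hcos.comp hinv).const_mul (1 / √c)
  rw [mul_one] at hlim
  refine hlim.congr' ?_
  filter_upwards [self_mem_nhdsWithin] with t (ht : 0 < t)
  rw [HurwitzZeta.evenKernel_functional_equation, ← Real.sqrt_eq_rpow, Real.sqrt_mul hc.le,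
    Function.comp_apply, one_div (c * t), mul_inv]
  field_simp

theorem sum_exp_sq_div_four_mul {a : ℕ} (ha : 0 < a) :
    ∑ k : Fin (2 * a), exp (2 * Real.pi * I * (k ^ 2 / (4 * a) : ℂ)) =
      √(2 * a) * (1 / (-I) ^ (1 / 2 : ℂ)) := by
  have ha' : (0 : ℝ) < 2 * a := by positivity
  have hlim : Tendsto (fun t : ℝ => √t * jacobiTheta ((1 + t * I) / (2 * a))) (𝓝[>] 0)
      (𝓝 (∑ k : Fin (2 * a), exp (2 * Real.pi * I * (k ^ 2 / (4 * a) : ℂ)) *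
        ((1 / √(2 * a) : ℝ) : ℂ))) := by
    refine (tendsto_finsetSum _ fun (k : Fin (2 * a)) _ => ((continuous_ofReal.tendsto _).comp
      (tendsto_sqrt_mul_evenKernel ha' (k / (2 * a) : ℝ))).const_mul
        (exp (2 * Real.pi * I * (k ^ 2 / (4 * a) : ℂ)))).congr' ?_
    filter_upwards [self_mem_nhdsWithin] with t ht
    rw [jacobiTheta_eq_sum_evenKernel ha ht, Finset.mul_sum]
    refine Finset.sum_congr rfl fun k _ => ?_
    rw [Function.comp_apply, ofReal_mul, mul_left_comm]
  have hsqrt : ((√(2 * a) : ℝ) : ℂ) ≠ 0 := mod_cast (Real.sqrt_pos.2 ha').ne'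
  rw [tendsto_nhds_unique (tendsto_sqrt_mul_jacobiTheta_near_cusp ha) hlim, ← Finset.sum_mul]
  push_cast
  field_simp

/-- The additive character `x ↦ exp (2πix)` of `ℚ`. -/
noncomputable def expRat (x : ℚ) : ℂ := exp (2 * Real.pi * I * x)

theorem expRat_add (x y : ℚ) : expRat (x + y) = expRat x * expRat y := by
  simp only [expRat, ← exp_add]
  push_cast
  ring_nf

theorem expRat_eq_one_iff {x : ℚ} : expRat x = 1 ↔ ∃ z : ℤ, x = z := by
  rw [expRat, exp_eq_one_iff]
  refine exists_congr fun n => ?_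
  rw [mul_comm, mul_left_inj' two_pi_I_ne_zero]
  norm_cast

theorem expRat_neg (x : ℚ) : expRat (-x) = (starRingEnd ℂ) (expRat x) := by
  simp only [expRat, ← exp_conj, map_mul, conj_I, conj_ofReal, map_ratCast, map_ofNat]
  push_cast
  ring_nf

theorem expRat_intCast (z : ℤ) : expRat z = 1 := expRat_eq_one_iff.2 ⟨z, rfl⟩

theorem expRat_zero : expRat 0 = 1 := mod_cast expRat_intCast 0

theorem expRat_sum {ι : Type*} (s : Finset ι) (f : ι → ℚ) :
    expRat (∑ i ∈ s, f i) = ∏ i ∈ s, expRat (f i) := by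
  induction s using Finset.cons_induction with
  | empty => simp [expRat_zero]
  | cons i s hi ih => rw [Finset.sum_cons, Finset.prod_cons, expRat_add, ih]

/-- The common argument of the quadratic Gauss sums `∑ k mod 2w, exp (2πi k² / (4w))` with `w` of a
given sign, as a complex number of modulus one: an eighth root of unity or its conjugate. -/
noncomputable def gaussPhase (w : ℚ) : ℂ :=
  if 0 < w then 1 / (-I) ^ (1 / 2 : ℂ) else (starRingEnd ℂ) (1 / (-I) ^ (1 / 2 : ℂ))

theorem gaussPhase_ne_zero (w : ℚ) : gaussPhase w ≠ 0 := by
  rw [gaussPhase]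
  split_ifs <;> simp [cpow_eq_zero_iff]

theorem sum_expRat_sq_div_four_mul {w : ℤ} (hw : w ≠ 0) :
    ∑ k : Fin (2 * w.natAbs), expRat ((k : ℚ) ^ 2 / (4 * w)) =
      √(2 * w.natAbs) * gaussPhase w := by
  rw [gaussPhase]
  rcases hw.lt_or_gt with hneg | hpos
  · have habs : (w : ℚ) = -w.natAbs := by
      rw [Nat.cast_natAbs, abs_of_neg hneg, Int.cast_neg, neg_neg]
    rw [if_neg (by exact_mod_cast hneg.not_gt), ← conj_ofReal, ← map_mul,
      ← sum_exp_sq_div_four_mul (Int.natAbs_pos.2 hw), map_sum]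
    refine Finset.sum_congr rfl fun k _ => ?_
    rw [habs, mul_neg, div_neg, expRat_neg, expRat]
    push_cast
    rfl
  · have habs : (w : ℚ) = w.natAbs := by
      rw [Nat.cast_natAbs, abs_of_pos hpos]
    rw [if_pos (by exact_mod_cast hpos), ← sum_exp_sq_div_four_mul (Int.natAbs_pos.2 hw)]
    refine Finset.sum_congr rfl fun k _ => ?_
    rw [habs, expRat]
    push_cast
    rfl

end GaussSum

section Transversal

variable {V ι κ : Type*} [AddCommGroup V] {M N L : AddSubgroup V} {f : ι → V} {g : κ → V}

/-- The family `f` is a system of representatives in `M` of the cosets of `L`. The inclusion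
`L ≤ M` is not part of the definition. -/
structure IsTransversal (f : ι → V) (M L : AddSubgroup V) : Prop where
  mem : ∀ i, f i ∈ M
  surj : ∀ u ∈ M, ∃ i, u - f i ∈ L
  inj : ∀ i j, f i - f j ∈ L → i = j

namespace IsTransversal

theorem sum_eq_sum [Fintype ι] [Fintype κ] (hf : IsTransversal f M L) (hg : IsTransversal g M L)
    (ψ : V → ℂ) (hψ : ∀ u ∈ M, ∀ v ∈ L, ψ (u + v) = ψ u) : ∑ i, ψ (f i) = ∑ j, ψ (g j) := by
  choose φ hφ using fun i => hg.surj (f i) (hf.mem i)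
  refine Fintype.sum_bijective φ ⟨fun i j hij => hf.inj _ _ ?_, fun j => ?_⟩ _ _ fun i => ?_
  · simpa [hij] using L.sub_mem (hφ i) (hφ j)
  · obtain ⟨i, hi⟩ := hf.surj (g j) (hg.mem j)
    exact ⟨i, hg.inj _ _ (by simpa using L.neg_mem (L.add_mem (hφ i) hi))⟩
  · rw [← hψ _ (hg.mem (φ i)) _ (hφ i), add_sub_cancel]

theorem tower (hf : IsTransversal f M L) (hg : IsTransversal g L N) (hLM : L ≤ M) (hNL : N ≤ L) :
    IsTransversal (fun p : ι × κ => f p.1 + g p.2) M N where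
  mem p := M.add_mem (hf.mem _) (hLM (hg.mem _))
  surj u hu := by
    obtain ⟨i, hi⟩ := hf.surj u hu
    obtain ⟨j, hj⟩ := hg.surj _ hi
    exact ⟨(i, j), by simpa [sub_sub] using hj⟩
  inj := by
    rintro ⟨i, j⟩ ⟨i', j'⟩ h
    obtain rfl : i = i' := hf.inj _ _ <| by
      simpa [add_sub_add_comm] using L.sub_mem (hNL h) (L.sub_mem (hg.mem j) (hg.mem j'))
    rw [hg.inj j j' (by simpa using h)]

theorem sup (hf : IsTransversal f M L) (hg : IsTransversal g N L) (hL : M ⊓ N = L) :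
    IsTransversal (fun p : ι × κ => f p.1 + g p.2) (M ⊔ N) L where
  mem p := AddSubgroup.add_mem_sup (hf.mem _) (hg.mem _)
  surj u hu := by
    obtain ⟨a, ha, b, hb, rfl⟩ := AddSubgroup.mem_sup.1 hu
    obtain ⟨i, hi⟩ := hf.surj a ha
    obtain ⟨j, hj⟩ := hg.surj b hb
    exact ⟨(i, j), by simpa [add_sub_add_comm] using L.add_mem hi hj⟩
  inj := by
    rintro ⟨i, j⟩ ⟨i', j'⟩ h
    rw [add_sub_add_comm] at h
    have hi : f i - f i' ∈ L := hL ▸ ⟨M.sub_mem (hf.mem _) (hf.mem _), by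
      simpa using N.sub_mem ((hL ▸ inf_le_right : L ≤ N) h) (N.sub_mem (hg.mem j) (hg.mem j'))⟩
    have hj : g j - g j' ∈ L := by simpa using L.sub_mem h hi
    rw [hf.inj _ _ hi, hg.inj _ _ hj]

theorem const_add (hf : IsTransversal f M L) {a : V} (ha : a ∈ M) :
    IsTransversal (fun i => a + f i) M L where
  mem i := M.add_mem ha (hf.mem i)
  surj u hu := by
    obtain ⟨i, hi⟩ := hf.surj (u - a) (M.sub_mem hu ha)
    exact ⟨i, by simpa [sub_sub] using hi⟩
  inj i j h := hf.inj _ _ (by simpa using h)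

theorem restrict (hf : IsTransversal f M L) (hNM : N ≤ M) (hLN : L ≤ N) :
    IsTransversal (fun i : {i // f i ∈ N} => f i) N L where
  mem i := i.2
  surj u hu := by
    obtain ⟨i, hi⟩ := hf.surj u (hNM hu)
    exact ⟨⟨i, by simpa using N.sub_mem hu (hLN hi)⟩, hi⟩
  inj i j h := Subtype.ext (hf.inj _ _ h)

theorem sum_character_eq_zero [Fintype ι] (hf : IsTransversal f M L) (hLM : L ≤ M) {χ : V → ℂ}
    (hadd : ∀ u ∈ M, ∀ v ∈ M, χ (u + v) = χ u * χ v) (hL : ∀ v ∈ L, χ v = 1)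
    {u : V} (hu : u ∈ M) (hχ : χ u ≠ 1) : ∑ i, χ (f i) = 0 := by
  have hshift := (hf.const_add hu).sum_eq_sum hf χ fun u hu v hv => by
    rw [hadd u hu v (hLM hv), hL v hv, mul_one]
  simp only [hadd _ hu _ (hf.mem _), ← Finset.mul_sum] at hshift
  exact (mul_left_eq_self₀.1 hshift).resolve_left hχ

end IsTransversal

theorem isTransversal_fin {n : ℕ} (hn : 0 < n) :
    IsTransversal (fun k : Fin n => (k : ℤ)) ⊤ (AddSubgroup.zmultiples (n : ℤ)) where
  mem _ := AddSubgroup.mem_top _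
  surj z _ := by
    have hn' : (n : ℤ) ≠ 0 := mod_cast hn.ne'
    have hlt := Int.emod_lt_of_pos z (mod_cast hn : (0 : ℤ) < n)
    have hnonneg := Int.emod_nonneg z hn'
    refine ⟨⟨(z % n).toNat, by omega⟩, Int.mem_zmultiples_iff.2 ?_⟩
    rw [Int.toNat_of_nonneg hnonneg]
    exact Int.dvd_self_sub_emod
  inj i j h := by
    rw [Int.mem_zmultiples_iff, ← Nat.modEq_iff_dvd] at h
    exact Fin.ext (h.eq_of_lt_of_lt j.2 i.2).symm

end Transversal

section Milgram

open QuadraticMap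

variable {V ι κ : Type*} [AddCommGroup V] [Module ℚ V] {Q : QuadraticForm ℚ V}
  {L₀ L : AddSubgroup V}

theorem expRat_apply_add (Q : QuadraticForm ℚ V) (u v : V) :
    expRat (Q (u + v)) = expRat (Q u) * expRat (Q v) * expRat (polar Q u v) := by
  rw [← expRat_add, ← expRat_add, polar]
  ring_nf

/-- The dual of the lattice `L` for the polar form `Q (u + v) - Q u - Q v` of `Q`. -/
def dualLattice (Q : QuadraticForm ℚ V) (L : AddSubgroup V) : AddSubgroup V where
  carrier := {u | ∀ v ∈ L, ∃ z : ℤ, polar Q u v = z}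
  zero_mem' v _ := ⟨0, by simp⟩
  add_mem' {u u'} hu hu' v hv := by
    obtain ⟨z, hz⟩ := hu v hv
    obtain ⟨z', hz'⟩ := hu' v hv
    exact ⟨z + z', by rw [polar_add_left, hz, hz', Int.cast_add]⟩
  neg_mem' {u} hu v hv := by
    obtain ⟨z, hz⟩ := hu v hv
    exact ⟨-z, by rw [polar_neg_left, hz, Int.cast_neg]⟩

theorem mem_dualLattice {u : V} : u ∈ dualLattice Q L ↔ ∀ v ∈ L, ∃ z : ℤ, polar Q u v = z :=
  Iff.rfl

theorem dualLattice_anti (h : L₀ ≤ L) : dualLattice Q L ≤ dualLattice Q L₀ :=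
  fun _ hu v hv => hu v (h hv)

theorem le_dualLattice (heven : ∀ v ∈ L, ∃ z : ℤ, Q v = z) : L ≤ dualLattice Q L := by
  intro u hu v hv
  obtain ⟨a, ha⟩ := heven _ (L.add_mem hu hv)
  obtain ⟨b, hb⟩ := heven u hu
  obtain ⟨c, hc⟩ := heven v hv
  exact ⟨a - b - c, by rw [polar, ha, hb, hc, Int.cast_sub, Int.cast_sub]⟩

theorem expRat_add_of_mem_dualLattice (heven : ∀ v ∈ L, ∃ z : ℤ, Q v = z) {u v : V}
    (hu : u ∈ dualLattice Q L) (hv : v ∈ L) : expRat (Q (u + v)) = expRat (Q u) := by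
  rw [expRat_apply_add, expRat_eq_one_iff.2 (heven v hv), expRat_eq_one_iff.2 (hu v hv), mul_one,
    mul_one]

open Classical in
theorem sum_expRat_polar [Fintype κ] {g : κ → V} (hg : IsTransversal g L L₀) (hL : L₀ ≤ L) {u : V}
    (hu : u ∈ dualLattice Q L₀) :
    ∑ k, expRat (polar Q u (g k)) = if u ∈ dualLattice Q L then (Fintype.card κ : ℂ) else 0 := by
  split_ifs with huL
  · simp [expRat_eq_one_iff.2 (huL _ (hg.mem _))]
  · rw [mem_dualLattice] at huL
    push Not at huL
    obtain ⟨v, hv, hne⟩ := huL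
    refine hg.sum_character_eq_zero (χ := fun v => expRat (polar Q u v)) hL (fun v _ v' _ => ?_)
      (fun v hv => expRat_eq_one_iff.2 (hu v hv)) hv (fun h => ?_)
    · rw [polar_add_right, expRat_add]
    · obtain ⟨z, hz⟩ := expRat_eq_one_iff.1 h
      exact hne z hz

open Classical in
/- Averaging over `L / L₀` kills the cosets outside the dual of `L`. -/
theorem sum_expRat_eq_sum_ite [Finite ι] [Fintype κ] (hL : L₀ ≤ L)
    (heven : ∀ v ∈ L, ∃ z : ℤ, Q v = z) {g : ι → V} (hg : IsTransversal g L L₀)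
    {F : κ → V} (hF : IsTransversal F (dualLattice Q L₀) L₀) :
    ∑ k, expRat (Q (F k)) = ∑ k, if F k ∈ dualLattice Q L then expRat (Q (F k)) else 0 := by
  have := Fintype.ofFinite ι
  have hLM₀ : L ≤ dualLattice Q L₀ := (le_dualLattice heven).trans (dualLattice_anti hL)
  obtain ⟨i₀, -⟩ := hg.surj 0 L.zero_mem
  have hcard : (Fintype.card ι : ℂ) ≠ 0 := mod_cast (Fintype.card_pos_iff.2 ⟨i₀⟩).ne'
  refine mul_left_cancel₀ hcard ?_
  calc Fintype.card ι * ∑ k, expRat (Q (F k))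
      = ∑ i, ∑ k, expRat (Q (g i + F k)) := by
        rw [Finset.sum_congr rfl fun i _ =>
          (hF.const_add (hLM₀ (hg.mem i))).sum_eq_sum hF (fun u => expRat (Q u)) fun u hu v hv =>
            expRat_add_of_mem_dualLattice (fun v hv => heven v (hL hv)) hu hv]
        simp
    _ = ∑ k, expRat (Q (F k)) * ∑ i, expRat (polar Q (F k) (g i)) := by
        rw [Finset.sum_comm]
        refine Finset.sum_congr rfl fun k _ => ?_
        rw [Finset.mul_sum]
        refine Finset.sum_congr rfl fun i _ => ?_
        rw [add_comm, expRat_apply_add, expRat_eq_one_iff.2 (heven _ (hg.mem i)), mul_one]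
    _ = Fintype.card ι * ∑ k, if F k ∈ dualLattice Q L then expRat (Q (F k)) else 0 := by
        rw [Finset.mul_sum]
        refine Finset.sum_congr rfl fun k _ => ?_
        rw [sum_expRat_polar hg hL (hF.mem k)]
        split_ifs <;> ring

theorem exists_sum_expRat_eq_mul_sum [Fintype ι] [Fintype κ] (hL : L₀ ≤ L)
    (heven : ∀ v ∈ L, ∃ z : ℤ, Q v = z) {f : ι → V} (hf : IsTransversal f (dualLattice Q L) L)
    {F : κ → V} (hF : IsTransversal F (dualLattice Q L₀) L₀) :
    ∃ m : ℕ, 0 < m ∧ ∑ k, expRat (Q (F k)) = m * ∑ i, expRat (Q (f i)) := by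
  classical
  have hLM := le_dualLattice heven
  have hMM₀ := dualLattice_anti (Q := Q) hL
  have hg : IsTransversal (fun k : {k // F k ∈ L} => F k) L L₀ := hF.restrict (hLM.trans hMM₀) hL
  have htower := (hf.tower hg hLM hL).sum_eq_sum (hF.restrict hMM₀ (hL.trans hLM))
    (fun u => expRat (Q u)) fun u hu v hv => expRat_add_of_mem_dualLattice heven hu (hL hv)
  obtain ⟨k₀, -⟩ := hg.surj 0 L.zero_mem
  refine ⟨Fintype.card {k // F k ∈ L}, Fintype.card_pos_iff.2 ⟨k₀⟩,
    (sum_expRat_eq_sum_ite hL heven hg hF).trans ?_⟩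
  rw [← Finset.sum_filter, ← Finset.sum_subtype_eq_sum_filter, Finset.subtype_univ, ← htower,
    Fintype.sum_prod_type, Finset.mul_sum]
  refine Finset.sum_congr rfl fun i _ => ?_
  rw [Finset.sum_congr rfl fun (j : {k // F k ∈ L}) _ =>
    expRat_add_of_mem_dualLattice heven (hf.mem i) j.2]
  simp

theorem mem_span_int_range_iff {b : Module.Basis ι ℚ V} {v : V} :
    v ∈ (Submodule.span ℤ (Set.range b)).toAddSubgroup ↔ ∀ i, ∃ z : ℤ, b.repr v i = z := by
  rw [Submodule.mem_toAddSubgroup, b.mem_span_iff_repr_mem ℤ]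
  simp [eq_comm]

section Diagonal

variable [Fintype ι] {b : Module.Basis ι ℚ V} {w : ι → ℤ}

theorem polar_eq_sum_of_diagonal (hQ : ∀ v, Q v = ∑ i, w i * b.repr v i ^ 2) (u v : V) :
    polar Q u v = ∑ i, 2 * w i * b.repr u i * b.repr v i := by
  simp only [polar, hQ, map_add, Finsupp.add_apply, ← Finset.sum_sub_distrib]
  exact Finset.sum_congr rfl fun i _ => by ring

theorem mem_dualLattice_span_iff (hQ : ∀ v, Q v = ∑ i, w i * b.repr v i ^ 2) {u : V} :
    u ∈ dualLattice Q (Submodule.span ℤ (Set.range b)).toAddSubgroup ↔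
      ∀ i, ∃ z : ℤ, 2 * w i * b.repr u i = z := by
  classical
  rw [mem_dualLattice]
  refine ⟨fun hu i => ?_, fun hu v hv => ?_⟩
  · obtain ⟨z, hz⟩ := hu (b i) (Submodule.subset_span ⟨i, rfl⟩)
    refine ⟨z, ?_⟩
    rw [← hz, polar_eq_sum_of_diagonal hQ]
    simp [Finsupp.single_apply]
  · choose y hy using hu
    choose z hz using mem_span_int_range_iff.1 hv
    refine ⟨∑ i, y i * z i, ?_⟩
    rw [polar_eq_sum_of_diagonal hQ]
    push_cast
    exact Finset.sum_congr rfl fun i _ => by rw [hy, hz]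

theorem isTransversal_diagonal (hQ : ∀ v, Q v = ∑ i, w i * b.repr v i ^ 2) (hw : ∀ i, w i ≠ 0) :
    IsTransversal (fun k : ∀ i, Fin (2 * (w i).natAbs) => ∑ i, ((k i : ℚ) / (2 * w i)) • b i)
      (dualLattice Q (Submodule.span ℤ (Set.range b)).toAddSubgroup)
      (Submodule.span ℤ (Set.range b)).toAddSubgroup := by
  have hfin := fun i => isTransversal_fin (n := 2 * (w i).natAbs) (by have := hw i; omega)
  have hdvd : ∀ i (z : ℤ),
      z ∈ AddSubgroup.zmultiples ((2 * (w i).natAbs : ℕ) : ℤ) ↔ 2 * w i ∣ z := fun i z => by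
    rw [Int.mem_zmultiples_iff, ← Int.natAbs_dvd (a := 2 * w i), Int.natAbs_mul]
    rfl
  have hw' : ∀ i, (2 * w i : ℚ) ≠ 0 := fun i => by have := hw i; positivity
  refine ⟨fun k => (mem_dualLattice_span_iff hQ).2 fun i => ⟨k i, ?_⟩, fun u hu => ?_,
    fun k k' hkk' => funext fun i => (hfin i).inj _ _ ((hdvd i _).2 ?_)⟩
  · rw [b.repr_sum_self, mul_div_cancel₀ _ (hw' i), Int.cast_natCast]
  · choose z hz using (mem_dualLattice_span_iff hQ).1 hu
    choose k hk using fun i => (hfin i).surj (z i) (AddSubgroup.mem_top _)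
    refine ⟨k, mem_span_int_range_iff.2 fun i => ?_⟩
    obtain ⟨y, hy⟩ := (hdvd i _).1 (hk i)
    refine ⟨y, mul_left_cancel₀ (hw' i) ?_⟩
    rw [map_sub, Finsupp.sub_apply, b.repr_sum_self, mul_sub, hz, mul_div_cancel₀ _ (hw' i)]
    exact_mod_cast hy
  · obtain ⟨y, hy⟩ := mem_span_int_range_iff.1 hkk' i
    rw [map_sub, Finsupp.sub_apply, b.repr_sum_self, b.repr_sum_self, ← sub_div,
      div_eq_iff (hw' i)] at hy
    exact ⟨y, by exact_mod_cast hy.trans (mul_comm _ _)⟩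

theorem sum_expRat_diagonal [DecidableEq ι] (hQ : ∀ v, Q v = ∑ i, w i * b.repr v i ^ 2)
    (hw : ∀ i, w i ≠ 0) :
    ∑ k : ∀ i, Fin (2 * (w i).natAbs), expRat (Q (∑ i, ((k i : ℚ) / (2 * w i)) • b i)) =
      ∏ i, √(2 * (w i).natAbs) * gaussPhase (w i) := by
  simp only [← sum_expRat_sq_div_four_mul (hw _)]
  rw [Finset.prod_univ_sum, Fintype.piFinset_univ]
  refine Finset.sum_congr rfl fun k _ => ?_
  rw [hQ, expRat_sum]
  refine Finset.prod_congr rfl fun i _ => congrArg expRat ?_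
  have hwi : (w i : ℚ) ≠ 0 := mod_cast hw i
  rw [b.repr_sum_self]
  field_simp
  norm_num

end Diagonal

theorem gaussPhase_pos_mul {a : ℚ} (ha : 0 < a) (w : ℚ) : gaussPhase (a * w) = gaussPhase w := by
  simp only [gaussPhase, mul_pos_iff_of_pos_left ha]

theorem exists_basis_mem_lattice_diagonal [Fintype ι] {w : ι → ℚ}
    (hQ : Q.Equivalent (weightedSumSquares ℚ w)) (hw : ∀ i, w i ≠ 0)
    (heven : ∀ v ∈ L, ∃ z : ℤ, Q v = z) (hfull : ∀ v : V, ∃ N : ℕ, 0 < N ∧ N • v ∈ L) :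
    ∃ (b : Module.Basis ι ℚ V) (m : ι → ℤ), (∀ i, b i ∈ L) ∧
      (∀ v, Q v = ∑ i, m i * b.repr v i ^ 2) ∧
      ∀ i, m i ≠ 0 ∧ gaussPhase (m i) = gaussPhase (w i) := by
  classical
  obtain ⟨e⟩ := hQ
  let b₀ : Module.Basis ι ℚ V := Module.Basis.ofEquivFun e.toLinearEquiv
  choose N hN hNL using fun i => hfull (b₀ i)
  have hN' : ∀ i, (N i : ℚ) ≠ 0 := fun i => mod_cast (hN i).ne'
  let b := b₀.unitsSMul fun i => Units.mk0 (N i : ℚ) (hN' i)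
  have hbL : ∀ i, b i ∈ L := fun i => by
    rw [Module.Basis.unitsSMul_apply, Units.smul_def, Units.val_mk0, Nat.cast_smul_eq_nsmul]
    exact hNL i
  have hQb : ∀ v, Q v = ∑ i, ((N i : ℚ) ^ 2 * w i) * b.repr v i ^ 2 := fun v => by
    have hrepr : ∀ i, e v i = N i * b.repr v i := fun i => by
      rw [Module.Basis.repr_unitsSMul, Units.smul_def, Units.val_inv_eq_inv_val, Units.val_mk0,
        smul_eq_mul, mul_inv_cancel_left₀ (hN' i)]
      rfl
    rw [← e.map_app v, weightedSumSquares_apply]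
    refine Finset.sum_congr rfl fun i _ => ?_
    rw [hrepr, smul_eq_mul]
    ring
  choose m hm using fun i => heven _ (hbL i)
  have hmw : ∀ i, (m i : ℚ) = (N i : ℚ) ^ 2 * w i := fun i => by
    rw [← hm, hQb]
    simp [Finsupp.single_apply]
  refine ⟨b, m, hbL, fun v => by simpa only [hmw] using hQb v, fun i => ⟨fun h0 => ?_, ?_⟩⟩
  · have := hmw i
    rw [h0, Int.cast_zero, eq_comm, mul_eq_zero] at this
    exact this.elim (pow_ne_zero 2 (hN' i)) (hw i)
  · rw [hmw, gaussPhase_pos_mul (by have := hN' i; positivity)]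

/- Milgram's theorem: the argument of the Gauss sum of an even lattice only depends on the
signature. -/
theorem exists_sum_expRat_eq_mul_prod_gaussPhase [Fintype ι] [Fintype κ] {w : ι → ℚ}
    (hQ : Q.Equivalent (weightedSumSquares ℚ w)) (hw : ∀ i, w i ≠ 0)
    (heven : ∀ v ∈ L, ∃ z : ℤ, Q v = z) (hfull : ∀ v : V, ∃ N : ℕ, 0 < N ∧ N • v ∈ L)
    {f : κ → V} (hf : IsTransversal f (dualLattice Q L) L) :
    ∃ r : ℝ, 0 < r ∧ ∑ k, expRat (Q (f k)) = r * ∏ i, gaussPhase (w i) := by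
  classical
  obtain ⟨b, m, hbL, hQb, hm⟩ := exists_basis_mem_lattice_diagonal hQ hw heven hfull
  have hL₀ : (Submodule.span ℤ (Set.range b)).toAddSubgroup ≤ L :=
    show Submodule.span ℤ (Set.range b) ≤ L.toIntSubmodule from
      Submodule.span_le.2 (Set.range_subset_iff.2 hbL)
  obtain ⟨d, hd, hsum⟩ := exists_sum_expRat_eq_mul_sum hL₀ heven hf
    (isTransversal_diagonal hQb fun i => (hm i).1)
  rw [sum_expRat_diagonal hQb fun i => (hm i).1, Finset.prod_mul_distrib,
    Finset.prod_congr rfl fun i _ => (hm i).2] at hsum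
  have hd' : (d : ℂ) ≠ 0 := mod_cast hd.ne'
  refine ⟨(∏ i, √(2 * (m i).natAbs)) / d, div_pos (Finset.prod_pos fun i _ => Real.sqrt_pos.2 ?_)
    (mod_cast hd), ?_⟩
  · have := Int.natAbs_pos.2 (hm i).1
    positivity
  · push_cast at hsum ⊢
    rw [div_mul_eq_mul_div, hsum, mul_div_cancel_left₀ _ hd']

end Milgram

section TraceForm

open Module QuadraticMap

section Scaled

variable {R A : Type*} [CommRing R] [CommRing A] [Algebra R A]

/-- The scaled trace form `(x, y) ↦ Tr(c x y)` of an `R`-algebra `A`. -/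
noncomputable def scaledTraceForm (R : Type*) {A : Type*} [CommRing R] [CommRing A] [Algebra R A]
    (c : A) : LinearMap.BilinForm R A :=
  (Algebra.traceForm R A).compl₁₂ (LinearMap.mulLeft R c) LinearMap.id

theorem scaledTraceForm_apply (c x y : A) :
    scaledTraceForm R c x y = Algebra.trace R A (c * x * y) := rfl

theorem scaledTraceForm_isSymm (c : A) : (scaledTraceForm R c).IsSymm :=
  ⟨fun x y => congrArg (Algebra.trace R A) (mul_right_comm c x y)⟩

/-- The quadratic form `x ↦ Tr(c x²)` of an `R`-algebra `A`. -/
noncomputable def traceQuad (R : Type*) {A : Type*} [CommRing R] [CommRing A] [Algebra R A]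
    (c : A) : QuadraticForm R A :=
  (scaledTraceForm R c).toQuadraticMap

theorem traceQuad_apply (c x : A) : traceQuad R c x = Algebra.trace R A (c * x ^ 2) := by
  rw [traceQuad, LinearMap.BilinMap.toQuadraticMap_apply, scaledTraceForm_apply, mul_assoc,
    ← pow_two]

theorem polar_traceQuad (c x y : A) :
    polar (traceQuad R c) x y = 2 * Algebra.trace R A (c * x * y) := by
  rw [traceQuad, LinearMap.BilinMap.polar_toQuadraticMap, scaledTraceForm_apply,
    scaledTraceForm_apply, mul_right_comm, two_mul]

theorem traceQuad_equivalent_mul {β γ : A} (hβ : β * γ = 1) (c : A) :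
    (traceQuad R (β ^ 2 * c)).Equivalent (traceQuad R c) :=
  ⟨⟨LinearEquiv.smulOfUnit (Units.mkOfMulEqOne β γ hβ) |>.restrictScalars R, fun x => by
    change traceQuad R c (β * x) = traceQuad R (β ^ 2 * c) x
    rw [traceQuad_apply, traceQuad_apply]
    ring_nf⟩⟩

end Scaled

theorem exists_scaledTraceForm_ne_zero {F E : Type*} [Field F] [Field E] [Algebra F E]
    [FiniteDimensional F E] [Algebra.IsSeparable F E] {c x : E} (hc : c ≠ 0) (hx : x ≠ 0) :
    ∃ y, scaledTraceForm F c x y ≠ 0 := by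
  by_contra! h
  exact mul_ne_zero hc hx ((traceForm_nondegenerate F E).1 _ h)

theorem exists_basis_iIsOrtho_scaledTraceForm {c : K} (hc : c ≠ 0) :
    ∃ e : Basis (Fin (finrank ℚ K)) ℚ K, (scaledTraceForm ℚ c).IsOrthoᵢ e ∧
      ∀ i, scaledTraceForm ℚ c (e i) (e i) ≠ 0 := by
  obtain ⟨e, he⟩ := LinearMap.BilinForm.exists_orthogonal_basis
    (LinearMap.BilinForm.isSymm_iff.1 (scaledTraceForm_isSymm (R := ℚ) c))
  refine ⟨e, he, fun i hi => ?_⟩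
  obtain ⟨y, hy⟩ := exists_scaledTraceForm_ne_zero (F := ℚ) hc (e.ne_zero i)
  refine hy ?_
  rw [← e.sum_repr y, map_sum]
  refine Finset.sum_eq_zero fun j _ => ?_
  rw [map_smul, smul_eq_zero]
  obtain rfl | hij := eq_or_ne i j
  · exact .inr hi
  · exact .inr (he hij)

theorem toQuadraticMap_equivalent_weightedSumSquares {F V ι : Type*} [Field F] [NeZero (2 : F)]
    [AddCommGroup V] [Module F V] [Fintype ι] {B : LinearMap.BilinForm F V} (hB : B.IsSymm)
    {e : Basis ι F V} (he : B.IsOrthoᵢ e) :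
    B.toQuadraticMap.Equivalent (weightedSumSquares F fun i => B (e i) (e i)) := by
  have := invertibleOfNonzero (two_ne_zero (α := F))
  have hassoc : associated (R := F) B.toQuadraticMap = B :=
    associated_left_inverse (S := F) hB.eq
  have hrepr := basisRepr_eq_of_iIsOrtho B.toQuadraticMap e (hassoc.symm ▸ he)
  simp only [LinearMap.BilinMap.toQuadraticMap_apply] at hrepr
  exact hrepr ▸ ⟨isometryEquivBasisRepr _ e⟩

end TraceForm

section Signature

open Module QuadraticMap NumberField.mixedEmbedding

theorem mixedEmbedding_smul {F : Type*} [Field F] [CharZero F] (q : ℚ) (x : F) :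
    mixedEmbedding F (q • x) = (q : ℝ) • mixedEmbedding F x := by
  ext v <;> simp [Rat.smul_def]

theorem span_mixedEmbedding_comp_eq_top {ι : Type*} (e : Basis ι ℚ K) :
    Submodule.span ℝ (Set.range (mixedEmbedding K ∘ e)) = ⊤ := by
  rw [eq_top_iff, ← (latticeBasis K).span_eq, Submodule.span_le]
  rintro _ ⟨i, rfl⟩
  rw [latticeBasis_apply, SetLike.mem_coe, ← e.linearCombination_repr (integralBasis K i),
    Finsupp.linearCombination_apply, Finsupp.sum, map_sum]
  refine Submodule.sum_mem _ fun j _ => ?_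
  rw [mixedEmbedding_smul]
  exact Submodule.smul_mem _ _ (Submodule.subset_span ⟨j, rfl⟩)

/-- The `ℝ`-basis of `K ⊗ ℝ` (in its incarnation `mixedSpace K`) given by a `ℚ`-basis of `K`. -/
noncomputable def mixedBasis {ι : Type*} [Fintype ι] (e : Basis ι ℚ K) :
    Basis ι ℝ (mixedSpace K) :=
  basisOfTopLeSpanOfCardEqFinrank (mixedEmbedding K ∘ e) (span_mixedEmbedding_comp_eq_top e).ge
    (by rw [mixedEmbedding.finrank, finrank_eq_card_basis e])

theorem mixedBasis_apply {ι : Type*} [Fintype ι] (e : Basis ι ℚ K) (i : ι) :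
    mixedBasis e i = mixedEmbedding K (e i) := by
  simp [mixedBasis]

theorem mixedBasis_repr {ι : Type*} [Fintype ι] (e : Basis ι ℚ K) (x : K) (i : ι) :
    (mixedBasis e).repr (mixedEmbedding K x) i = e.repr x i := by
  conv_lhs => rw [← e.sum_repr x, map_sum]
  simp only [mixedEmbedding_smul, ← mixedBasis_apply, Basis.repr_sum_self]

theorem trace_mixedEmbedding (x : K) :
    Algebra.trace ℝ (mixedSpace K) (mixedEmbedding K x) = Algebra.trace ℚ K x := by
  classical
  let e := finBasis ℚ K
  simp [Algebra.trace_eq_matrix_trace (mixedBasis e), Algebra.trace_eq_matrix_trace e,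
    Matrix.trace, Algebra.leftMulMatrix_eq_repr_mul, mixedBasis_apply, ← map_mul, mixedBasis_repr]

theorem exists_sq_eq_mixedEmbedding {F : Type*} [Field F] {α : F}
    (hα : ∀ φ : F →+* ℝ, 0 < φ α) : ∃ β : mixedSpace F, β ^ 2 = mixedEmbedding F α := by
  choose s hs using fun z : ℂ => IsAlgClosed.exists_pow_nat_eq z two_pos
  refine ⟨(fun v => √(v.1.embedding_of_isReal v.2 α), fun v => s (v.1.embedding α)), ?_⟩
  ext v
  · exact Real.sq_sqrt (hα _).le
  · exact hs _

theorem sigPos_traceQuad_mixedEmbedding (c : K) :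
    sigPos (traceQuad ℝ (mixedEmbedding K c)) = sigPos (traceQuad ℚ c) := by
  obtain ⟨e, he⟩ := LinearMap.BilinForm.exists_orthogonal_basis
    (LinearMap.BilinForm.isSymm_iff.1 (scaledTraceForm_isSymm (R := ℚ) c))
  have hcoe (i j) : scaledTraceForm ℝ (mixedEmbedding K c) (mixedBasis e i) (mixedBasis e j) =
      scaledTraceForm ℚ c (e i) (e j) := by
    simp only [mixedBasis_apply, scaledTraceForm_apply, ← map_mul, trace_mixedEmbedding]
  have hortho : (scaledTraceForm ℝ (mixedEmbedding K c)).IsOrthoᵢ (mixedBasis e) := by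
    intro i j hij
    simpa using (hcoe i j).trans (mod_cast he hij)
  rw [traceQuad, traceQuad, QuadraticForm.sigPos_of_equiv_weightedSumSquares
    (toQuadraticMap_equivalent_weightedSumSquares (scaledTraceForm_isSymm _) hortho),
    QuadraticForm.sigPos_of_equiv_weightedSumSquares
    (toQuadraticMap_equivalent_weightedSumSquares (scaledTraceForm_isSymm _) he)]
  simp only [hcoe, Rat.cast_pos]

theorem sigPos_traceQuad_mul {α : K} (hα₀ : α ≠ 0) (hα : ∀ φ : K →+* ℝ, 0 < φ α) (c : K) :
    sigPos (traceQuad ℚ (α * c)) = sigPos (traceQuad ℚ c) := by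
  obtain ⟨β, hβ⟩ := exists_sq_eq_mixedEmbedding hα
  have hunit : β * (β * mixedEmbedding K α⁻¹) = 1 := by
    rw [← mul_assoc, ← pow_two, hβ, ← map_mul, mul_inv_cancel₀ hα₀, map_one]
  rw [← sigPos_traceQuad_mixedEmbedding, ← sigPos_traceQuad_mixedEmbedding, map_mul, ← hβ]
  exact (traceQuad_equivalent_mul hunit _).sigPos_eq

theorem prod_gaussPhase {ι : Type*} [Fintype ι] (w : ι → ℚ) :
    ∏ i, gaussPhase (w i) = gaussPhase 1 ^ {i | 0 < w i}.ncard *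
      gaussPhase (-1) ^ (Fintype.card ι - {i | 0 < w i}.ncard) := by
  classical
  have hneg : (Finset.univ.filter fun i => ¬ 0 < w i).card =
      Fintype.card ι - (Finset.univ.filter fun i => 0 < w i).card := by
    rw [← Finset.card_univ, ← Finset.card_filter_add_card_filter_not (s := .univ) fun i => 0 < w i,
      Nat.add_sub_cancel_left]
  rw [Set.ncard_eq_toFinset_card', Set.toFinset_ofPred, ← hneg]
  simp [gaussPhase, Finset.prod_ite]

theorem exists_sum_expRat_traceQuad_eq_mul {κ κ' : Type*} [Fintype κ] [Fintype κ'] {c α : K}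
    (hc : c ≠ 0) (hα₀ : α ≠ 0) (hα : ∀ φ : K →+* ℝ, 0 < φ α) {L L' : AddSubgroup K}
    (heven : ∀ v ∈ L, ∃ z : ℤ, traceQuad ℚ c v = z)
    (heven' : ∀ v ∈ L', ∃ z : ℤ, traceQuad ℚ (α * c) v = z)
    (hfull : ∀ v : K, ∃ N : ℕ, 0 < N ∧ N • v ∈ L) (hfull' : ∀ v : K, ∃ N : ℕ, 0 < N ∧ N • v ∈ L')
    {f : κ → K} (hf : IsTransversal f (dualLattice (traceQuad ℚ c) L) L)
    {f' : κ' → K} (hf' : IsTransversal f' (dualLattice (traceQuad ℚ (α * c)) L') L') :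
    ∑ k, expRat (traceQuad ℚ c (f k)) ≠ 0 ∧ ∃ r : ℝ, 0 < r ∧
      ∑ k, expRat (traceQuad ℚ (α * c) (f' k)) = r * ∑ k, expRat (traceQuad ℚ c (f k)) := by
  obtain ⟨e, he, hne⟩ := exists_basis_iIsOrtho_scaledTraceForm hc
  obtain ⟨e', he', hne'⟩ := exists_basis_iIsOrtho_scaledTraceForm (mul_ne_zero hα₀ hc)
  have hQ := toQuadraticMap_equivalent_weightedSumSquares (scaledTraceForm_isSymm c) he
  have hQ' := toQuadraticMap_equivalent_weightedSumSquares (scaledTraceForm_isSymm (α * c)) he'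
  have hphase : ∏ i, gaussPhase (scaledTraceForm ℚ (α * c) (e' i) (e' i)) =
      ∏ i, gaussPhase (scaledTraceForm ℚ c (e i) (e i)) := by
    rw [prod_gaussPhase, prod_gaussPhase, ← QuadraticForm.sigPos_of_equiv_weightedSumSquares hQ,
      ← QuadraticForm.sigPos_of_equiv_weightedSumSquares hQ']
    exact congrArg (fun s => gaussPhase 1 ^ s * gaussPhase (-1) ^ (_ - s))
      (sigPos_traceQuad_mul hα₀ hα c)
  obtain ⟨r, hr, hsum⟩ := exists_sum_expRat_eq_mul_prod_gaussPhase hQ hne heven hfull hf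
  obtain ⟨r', hr', hsum'⟩ := exists_sum_expRat_eq_mul_prod_gaussPhase hQ' hne' heven' hfull' hf'
  have hr₀ : (r : ℂ) ≠ 0 := mod_cast hr.ne'
  have hprod := Finset.prod_ne_zero_iff.2 fun i (_ : i ∈ Finset.univ) =>
    gaussPhase_ne_zero (scaledTraceForm ℚ c (e i) (e i))
  refine ⟨hsum ▸ mul_ne_zero hr₀ hprod, r' / r, div_pos hr' hr, ?_⟩
  rw [traceQuad, traceQuad, hsum, hsum', hphase, ← mul_assoc, Complex.ofReal_div,
    div_mul_cancel₀ _ hr₀]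

end Signature

section ResidueSymbol

theorem sum_addChar_sq_eq_gaussSum {F : Type*} [Field F] [Fintype F] [DecidableEq F]
    (hF : ringChar F ≠ 2) {ψ : AddChar F ℂ} (hψ : ψ ≠ 1) :
    ∑ x, ψ (x ^ 2) = gaussSum ((quadraticChar F).ringHomComp (Int.castRingHom ℂ)) ψ := by
  have hfiber (t : F) :
      ∑ x with x ^ 2 = t, ψ (x ^ 2) = (quadraticChar F t : ℂ) * ψ t + ψ t := by
    have hcard :
        ((Finset.univ.filter fun x : F => x ^ 2 = t).card : ℤ) = quadraticChar F t + 1 := by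
      rw [← quadraticChar_card_sqrts hF t]
      congr 2
      ext
      simp
    rw [Finset.sum_congr rfl fun x hx => congrArg ψ (Finset.mem_filter.1 hx).2, Finset.sum_const,
      nsmul_eq_mul, ← Int.cast_natCast, hcard, Int.cast_add, Int.cast_one, add_one_mul]
  rw [← Finset.sum_fiberwise Finset.univ fun x : F => x ^ 2]
  simp only [hfiber, Finset.sum_add_distrib]
  rw [AddChar.sum_eq_zero_of_ne_one hψ, add_zero]
  rfl

theorem sum_addChar_mul_sq_eq_quadraticChar_mul {F : Type*} [Field F] [Fintype F] [DecidableEq F]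
    (hF : ringChar F ≠ 2) {ψ : AddChar F ℂ} (hψ : ψ ≠ 1) {a : F} (ha : a ≠ 0) :
    ∑ x, ψ (a * x ^ 2) = quadraticChar F a * ∑ x, ψ (x ^ 2) := by
  have hshift : ψ.mulShift a ≠ 1 := fun h => hψ <| by
    ext x
    simpa [AddChar.mulShift_apply, mul_inv_cancel_left₀ ha] using DFunLike.congr_fun h (a⁻¹ * x)
  have hsq : (quadraticChar F a : ℂ) * (quadraticChar F a : ℤ) = 1 := by
    rw [← pow_two]
    exact mod_cast quadraticChar_sq_one ha
  have hsum := sum_addChar_sq_eq_gaussSum hF hshift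
  simp only [AddChar.mulShift_apply] at hsum
  rw [hsum, sum_addChar_sq_eq_gaussSum hF hψ, ← gaussSum_mulShift _ ψ (Units.mk0 a ha), ← mul_assoc,
    Units.val_mk0, MulChar.ringHomComp_apply, eq_intCast, hsq, one_mul]

variable {R : Type*} [CommRing R]

open Classical in
/-- The quadratic residue symbol of `α` modulo `p`, with the value `1` also when `α ∈ p`. -/
noncomputable def residueSymbol (α : R) (p : Ideal R) : ℤˣ :=
  if IsSquare (Ideal.Quotient.mk p α) then 1 else -1

theorem residueSymbol_eq_one_iff {α : R} {p : Ideal R} :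
    residueSymbol α p = 1 ↔ IsSquare (Ideal.Quotient.mk p α) := by
  simp [residueSymbol]

theorem coe_residueSymbol {α : R} {p : Ideal R} [p.IsMaximal] (hα : α ∉ p) [Fintype (R ⧸ p)]
    [DecidableEq (R ⧸ p)] :
    letI := Ideal.Quotient.field p
    (residueSymbol α p : ℤ) = quadraticChar (R ⧸ p) (Ideal.Quotient.mk p α) := by
  let := Ideal.Quotient.field p
  rw [quadraticChar_apply, quadraticCharFun, if_neg (mt Ideal.Quotient.eq_zero_iff_mem.1 hα),
    residueSymbol]
  split_ifs <;> rfl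

theorem residueSymbol_mul {α β : R} {p : Ideal R} [p.IsMaximal] [Finite (R ⧸ p)] (hα : α ∉ p)
    (hβ : β ∉ p) : residueSymbol (α * β) p = residueSymbol α p * residueSymbol β p := by
  classical
  have := Fintype.ofFinite (R ⧸ p)
  have hαβ : α * β ∉ p := fun h => (‹p.IsMaximal›.isPrime.mem_or_mem h).elim hα hβ
  let := Ideal.Quotient.field p
  apply Units.ext
  rw [Units.val_mul, coe_residueSymbol hα, coe_residueSymbol hβ, coe_residueSymbol hαβ, map_mul,
    map_mul]

theorem sum_addChar_mul_sq {α : R} {p : Ideal R} [p.IsMaximal] [Fintype (R ⧸ p)] (h2 : 2 ∉ p)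
    (hα : α ∉ p) {ψ : AddChar (R ⧸ p) ℂ} (hψ : ψ ≠ 1) :
    ∑ x, ψ (Ideal.Quotient.mk p α * x ^ 2) = residueSymbol α p * ∑ x, ψ (x ^ 2) := by
  classical
  let := Ideal.Quotient.field p
  have hchar : ringChar (R ⧸ p) ≠ 2 := fun h => h2 <| by
    rw [← Ideal.Quotient.eq_zero_iff_mem, map_ofNat]
    have hcast := ringChar.Nat.cast_ringChar (R := R ⧸ p)
    rwa [h, Nat.cast_ofNat] at hcast
  rw [coe_residueSymbol hα]
  exact sum_addChar_mul_sq_eq_quadraticChar_mul hchar hψ (mt Ideal.Quotient.eq_zero_iff_mem.1 hα)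

theorem exists_addChar_quotient {p : Ideal R} {χ : AddChar R ℂ} (hχ : ∀ y ∈ p, χ y = 1) :
    ∃ ψ : AddChar (R ⧸ p) ℂ, ∀ y, ψ (Ideal.Quotient.mk p y) = χ y :=
  ⟨AddChar.toAddMonoidHomEquiv.symm
    (QuotientAddGroup.lift p.toAddSubgroup (AddChar.toAddMonoidHomEquiv χ) hχ), fun _ => rfl⟩

end ResidueSymbol

section IdealLattice

open FractionalIdeal

variable {R F : Type*} [CommRing R] [Field F] [Algebra R F]

/-- The additive group of a fractional ideal, viewed as a lattice in the fraction field. -/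
def idealLattice (I : FractionalIdeal R⁰ F) : AddSubgroup F :=
  (I : Submodule R F).toAddSubgroup

theorem mem_idealLattice {I : FractionalIdeal R⁰ F} {x : F} : x ∈ idealLattice I ↔ x ∈ I :=
  Iff.rfl

theorem smul_mem_fractionalIdeal {I : FractionalIdeal R⁰ F} (r : R) {x : F} (hx : x ∈ I) :
    r • x ∈ I :=
  (I : Submodule R F).smul_mem r hx

theorem smul_mem_coeIdeal_mul {a : Ideal R} {I : FractionalIdeal R⁰ F} {r : R} (hr : r ∈ a) {x : F}
    (hx : x ∈ I) : r • x ∈ (a : FractionalIdeal R⁰ F) * I := by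
  rw [Algebra.smul_def]
  exact mul_mem_mul (mem_coeIdeal_of_mem _ hr) hx

variable [IsDedekindDomain R] [IsFractionRing R F] {a b : Ideal R} {k : FractionalIdeal R⁰ F}

theorem smul_mem_inv_of_mem_mul_inv {r : R} (hr : r ∈ a) {x : F}
    (hx : x ∈ ((a : FractionalIdeal R⁰ F) * k)⁻¹) : r • x ∈ k⁻¹ := by
  have hle : (a : FractionalIdeal R⁰ F) * (a * k)⁻¹ ≤ k⁻¹ := by
    rw [mul_inv, ← mul_assoc]
    exact (mul_le_mul_left mul_inv_le_one _).trans_eq (one_mul _)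
  exact hle (smul_mem_coeIdeal_mul hr hx)

theorem inv_le_mul_inv (ha : a ≠ ⊥) : k⁻¹ ≤ ((a : FractionalIdeal R⁰ F) * k)⁻¹ := by
  have hinv : 1 ≤ (a : FractionalIdeal R⁰ F)⁻¹ := by
    rw [← inv_one]
    exact inv_anti_mono (coeIdeal_ne_zero.2 ha) one_ne_zero coeIdeal_le_one
  rw [mul_inv]
  exact (one_mul _).symm.trans_le (mul_le_mul_left hinv _)

theorem idealLattice_inf_of_isCoprime (ha : a ≠ ⊥) (hb : b ≠ ⊥) (hab : IsCoprime a b) :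
    idealLattice ((a : FractionalIdeal R⁰ F) * k)⁻¹ ⊓
      idealLattice ((b : FractionalIdeal R⁰ F) * k)⁻¹ =
      idealLattice k⁻¹ := by
  obtain ⟨i, hi, j, hj, hij⟩ := Ideal.isCoprime_iff_exists.1 hab
  refine le_antisymm (fun x hx => ?_) (le_inf (inv_le_mul_inv ha) (inv_le_mul_inv hb))
  rw [← one_smul R x, ← hij, add_smul]
  exact add_mem (smul_mem_inv_of_mem_mul_inv hi hx.1) (smul_mem_inv_of_mem_mul_inv hj hx.2)

theorem idealLattice_sup_of_isCoprime (ha : a ≠ ⊥) (hb : b ≠ ⊥) (hab : IsCoprime a b) :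
    idealLattice ((a : FractionalIdeal R⁰ F) * k)⁻¹ ⊔
      idealLattice ((b : FractionalIdeal R⁰ F) * k)⁻¹ =
      idealLattice (((a * b : Ideal R) : FractionalIdeal R⁰ F) * k)⁻¹ := by
  obtain ⟨i, hi, j, hj, hij⟩ := Ideal.isCoprime_iff_exists.1 hab
  have hba : ((a * b : Ideal R) : FractionalIdeal R⁰ F) * k =
      (b : FractionalIdeal R⁰ F) * (a * k) := by
    rw [coeIdeal_mul, mul_right_comm, mul_comm]
  have hab' : ((a * b : Ideal R) : FractionalIdeal R⁰ F) * k =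
      (a : FractionalIdeal R⁰ F) * (b * k) := by
    rw [coeIdeal_mul, mul_assoc]
  refine le_antisymm (sup_le ?_ ?_) fun x hx => ?_
  · exact hba ▸ inv_le_mul_inv hb
  · exact hab' ▸ inv_le_mul_inv ha
  · rw [← one_smul R x, ← hij, add_smul, add_comm]
    exact AddSubgroup.add_mem_sup (smul_mem_inv_of_mem_mul_inv hj (hba ▸ hx))
      (smul_mem_inv_of_mem_mul_inv hi (hab' ▸ hx))

theorem exists_coeIdeal_eq_spanSingleton_mul_isCoprime (ha : a ≠ ⊥) (hk : k ≠ 0) :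
    ∃ (x : F) (J : Ideal R), (J : FractionalIdeal R⁰ F) = spanSingleton R⁰ x * (a * k) ∧
      IsCoprime J a := by
  have ha' := coeIdeal_ne_zero (K := F).2 ha
  obtain ⟨x, hx⟩ := IsDedekindDomain.exists_add_spanSingleton_mul_eq
    (coeIdeal_le_one (I := a)) ha' (mul_ne_zero ha' hk)
  obtain ⟨J, hJ⟩ := le_one_iff_exists_coeIdeal.1 (le_add_self.trans_eq hx)
  refine ⟨x, J, hJ, ?_⟩
  rw [← hJ, ← coeIdeal_sup, coeIdeal_eq_one] at hx
  exact (Ideal.isCoprime_iff_add.2 hx).symm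

theorem isTransversal_out_smul (ha : a ≠ ⊥) (hk : k ≠ 0) {x : F} {J : Ideal R}
    (hJ : (J : FractionalIdeal R⁰ F) = spanSingleton R⁰ x * (a * k)) (hJa : IsCoprime J a) :
    IsTransversal (fun r : R ⧸ a => (r.out : R) • x)
      (idealLattice ((a : FractionalIdeal R⁰ F) * k)⁻¹) (idealLattice k⁻¹) := by
  have hak := mul_ne_zero (coeIdeal_ne_zero (K := F).2 ha) hk
  have hspan : spanSingleton R⁰ x = J * (a * k)⁻¹ := by rw [hJ, mul_inv_cancel_right₀ hak]
  have hx : x ∈ ((a : FractionalIdeal R⁰ F) * k)⁻¹ := by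
    rw [← spanSingleton_le_iff_mem, hspan]
    exact (mul_le_mul_left coeIdeal_le_one _).trans_eq (one_mul _)
  obtain ⟨j, hj, i, hi, hji⟩ := Ideal.isCoprime_iff_exists.1 hJa
  refine ⟨fun r => smul_mem_fractionalIdeal _ hx, fun u hu => ?_, fun r r' h => ?_⟩
  · obtain ⟨s, hs⟩ := (mem_spanSingleton _).1 (hspan ▸ smul_mem_coeIdeal_mul hj hu)
    refine ⟨Ideal.Quotient.mk a s, ?_⟩
    have hout : s - (Ideal.Quotient.mk a s).out ∈ a := by
      rw [← Ideal.Quotient.eq, Ideal.Quotient.mk_out]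
    have hsplit : u - ((Ideal.Quotient.mk a s).out : R) • x =
        i • u + (s - (Ideal.Quotient.mk a s).out) • x := by
      rw [sub_smul, hs, add_sub, ← add_smul, add_comm i, hji, one_smul]
    rw [hsplit]
    exact add_mem (smul_mem_inv_of_mem_mul_inv hi hu) (smul_mem_inv_of_mem_mul_inv hout hx)
  · rw [← sub_smul] at h
    rw [← Ideal.Quotient.mk_out r, ← Ideal.Quotient.mk_out r', Ideal.Quotient.eq]
    set t : R := r.out - r'.out
    have htj : algebraMap R F (t * j) ∈ (a : FractionalIdeal R⁰ F) := by
      have hle : spanSingleton R⁰ (t • x) * (a * k) ≤ a := by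
        refine (mul_le_mul_left (spanSingleton_le_iff_mem.2 h) _).trans_eq ?_
        rw [mul_comm, mul_inv_cancel_right₀ hk]
      refine hle ?_
      rw [Algebra.smul_def, ← spanSingleton_mul_spanSingleton, mul_assoc, ← hJ, map_mul]
      exact mul_mem_mul (mem_spanSingleton_self _ _) (mem_coeIdeal_of_mem _ hj)
    rw [← mul_one t, ← hji, mul_add]
    exact a.add_mem ((mem_coeIdeal _).1 htj |>.elim fun y hy =>
      IsFractionRing.injective R F hy.2 ▸ hy.1) (a.mul_mem_left _ hi)

end IdealLattice

section Codifferent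

open FractionalIdeal

/-- The inverse different of `K`, i.e. the dual of `𝓞 K` under the trace form. -/
noncomputable def codifferent (K : Type*) [Field K] [NumberField K] : FractionalIdeal (𝓞 K)⁰ K :=
  dual ℤ ℚ 1

theorem codifferent_ne_zero : codifferent K ≠ 0 :=
  dual_ne_zero ℤ ℚ one_ne_zero

theorem trace_two_mul (x : K) : Algebra.trace ℚ K (2 * x) = 2 * Algebra.trace ℚ K x := by
  rw [two_mul, two_mul, map_add]

theorem mem_codifferent_mul_inv_iff {I : FractionalIdeal (𝓞 K)⁰ K} (hI : I ≠ 0) {x : K} :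
    x ∈ codifferent K * I⁻¹ ↔ ∀ y ∈ I, ∃ z : ℤ, Algebra.trace ℚ K (x * y) = z := by
  rw [codifferent, ← dual_eq_mul_inv, mem_dual hI]
  simp [eq_comm]

theorem mem_codifferent_iff {x : K} :
    x ∈ codifferent K ↔ ∀ y : 𝓞 K, ∃ z : ℤ, Algebra.trace ℚ K (x * y) = z := by
  simpa [mem_one_iff] using
    mem_codifferent_mul_inv_iff (one_ne_zero (α := FractionalIdeal (𝓞 K)⁰ K))

theorem exists_trace_eq_of_mem_codifferent {x : K} (hx : x ∈ codifferent K) :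
    ∃ z : ℤ, Algebra.trace ℚ K x = z := by
  simpa using mem_codifferent_iff.1 hx 1

theorem exists_trace_eq_of_spanSingleton_le {x : K} {t : Ideal (𝓞 K)}
    (hx : spanSingleton (𝓞 K)⁰ x ≤ codifferent K * t) : ∃ z : ℤ, Algebra.trace ℚ K x = z :=
  exists_trace_eq_of_mem_codifferent <| spanSingleton_le_iff_mem.1 <|
    hx.trans ((mul_le_mul_right coeIdeal_le_one _).trans_eq (mul_one _))

theorem exists_pos_nsmul_mem_idealLattice {I : FractionalIdeal (𝓞 K)⁰ K} (hI : I ≠ 0) (v : K) :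
    ∃ N : ℕ, 0 < N ∧ N • v ∈ idealLattice I := by
  obtain ⟨x, hx₀, hx⟩ : ∃ x : K, x ≠ 0 ∧ x ∈ I := by
    contrapose! hI
    exact (eq_zero_iff).2 fun x hx => by_contra fun h => hI x h hx
  obtain ⟨m, hm, hmv⟩ := exists_integral_multiples ℤ ℚ {v / x}
  have hint : IsIntegral ℤ (m.natAbs • (v / x)) := by
    rw [← natCast_zsmul, ← Int.sign_mul_self_eq_natAbs, mul_smul]
    exact (hmv _ (Finset.mem_singleton_self _)).smul _
  refine ⟨m.natAbs, Int.natAbs_pos.2 hm, ?_⟩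
  have hmul : m.natAbs • (v / x) * x = m.natAbs • v := by
    rw [smul_mul_assoc, div_mul_cancel₀ v hx₀]
  exact hmul ▸ I.val.smul_mem (⟨_, hint⟩ : 𝓞 K) hx

end Codifferent

section TraceLattice

open FractionalIdeal

variable {P : Ideal (𝓞 K)} {k : FractionalIdeal (𝓞 K)⁰ K} {c : K}

theorem ne_zero_of_spanSingleton_eq_codifferent_mul (hP : P ≠ ⊥) (hk : k ≠ 0)
    (hc : spanSingleton (𝓞 K)⁰ c = codifferent K * (P * k ^ 2)) : c ≠ 0 := by
  rintro rfl
  rw [spanSingleton_zero] at hc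
  exact mul_ne_zero codifferent_ne_zero
    (mul_ne_zero (coeIdeal_ne_zero.2 hP) (pow_ne_zero 2 hk)) hc.symm

theorem exists_traceQuad_eq_of_mem_inv (hk : k ≠ 0)
    (hc : spanSingleton (𝓞 K)⁰ c = codifferent K * (P * k ^ 2)) {v : K}
    (hv : v ∈ idealLattice k⁻¹) : ∃ z : ℤ, traceQuad ℚ c v = z := by
  rw [traceQuad_apply]
  refine exists_trace_eq_of_spanSingleton_le (t := P) ?_
  calc spanSingleton (𝓞 K)⁰ (c * v ^ 2)
      = codifferent K * (P * k ^ 2) * spanSingleton (𝓞 K)⁰ v ^ 2 := by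
        rw [← spanSingleton_mul_spanSingleton, spanSingleton_pow, hc]
    _ ≤ codifferent K * (P * k ^ 2) * k⁻¹ ^ 2 := by
        gcongr
        exact spanSingleton_le_iff_mem.2 hv
    _ = codifferent K * P := by field_simp

theorem dualLattice_traceQuad_idealLattice (hP : P ≠ ⊥) (hk : k ≠ 0)
    (hc : spanSingleton (𝓞 K)⁰ c = codifferent K * (P * k ^ 2)) :
    dualLattice (traceQuad ℚ c) (idealLattice k⁻¹) =
      idealLattice ((Ideal.span {2} * P : Ideal (𝓞 K)) * k : FractionalIdeal (𝓞 K)⁰ K)⁻¹ := by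
  have hP' := coeIdeal_ne_zero (K := K).2 hP
  have hd := codifferent_ne_zero (K := K)
  have h2 : spanSingleton (𝓞 K)⁰ (2 : K) ≠ 0 := spanSingleton_ne_zero_iff.2 two_ne_zero
  set I := spanSingleton (𝓞 K)⁰ (2 * c) with hI
  have hIeq : I = spanSingleton (𝓞 K)⁰ (2 : K) * (codifferent K * (P * k ^ 2)) := by
    rw [hI, ← spanSingleton_mul_spanSingleton, hc]
  have hI₀ : 0 < I := by
    rw [pos_iff_ne_zero, hIeq]
    positivity
  ext u
  calc u ∈ dualLattice (traceQuad ℚ c) (idealLattice k⁻¹)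
      ↔ 2 * c * u ∈ codifferent K * k⁻¹⁻¹ := by
        rw [mem_codifferent_mul_inv_iff (inv_ne_zero hk), mem_dualLattice]
        simp only [polar_traceQuad, mem_idealLattice, ← trace_two_mul, mul_assoc]
    _ ↔ I * spanSingleton (𝓞 K)⁰ u ≤
          I * ((Ideal.span {2} * P : Ideal (𝓞 K)) * k : FractionalIdeal (𝓞 K)⁰ K)⁻¹ := by
        rw [← spanSingleton_le_iff_mem, ← spanSingleton_mul_spanSingleton, ← hI, hIeq,
          coeIdeal_mul, coeIdeal_span_singleton, map_ofNat]
        field_simp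
    _ ↔ u ∈ idealLattice ((Ideal.span {2} * P : Ideal (𝓞 K)) * k : FractionalIdeal (𝓞 K)⁰ K)⁻¹ := by
        rw [mul_le_mul_iff_right₀ hI₀, spanSingleton_le_iff_mem, mem_idealLattice]

theorem exists_polar_traceQuad_eq {a b : Ideal (𝓞 K)} (ha : a ≠ ⊥) (hb : b ≠ ⊥) (hk : k ≠ 0)
    (hab : a * b ∣ Ideal.span {2} * P)
    (hc : spanSingleton (𝓞 K)⁰ c = codifferent K * (P * k ^ 2)) {u v : K}
    (hu : u ∈ idealLattice (a * k : FractionalIdeal (𝓞 K)⁰ K)⁻¹)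
    (hv : v ∈ idealLattice (b * k : FractionalIdeal (𝓞 K)⁰ K)⁻¹) :
    ∃ z : ℤ, QuadraticMap.polar (traceQuad ℚ c) u v = z := by
  obtain ⟨t, ht⟩ := hab
  have ha' := coeIdeal_ne_zero (K := K).2 ha
  have hb' := coeIdeal_ne_zero (K := K).2 hb
  have ht' := congrArg (fun I : Ideal (𝓞 K) => (I : FractionalIdeal (𝓞 K)⁰ K)) ht
  simp only [coeIdeal_mul, coeIdeal_span_singleton, map_ofNat] at ht'
  rw [polar_traceQuad, ← trace_two_mul]
  refine exists_trace_eq_of_spanSingleton_le (t := t) ?_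
  calc spanSingleton (𝓞 K)⁰ (2 * (c * u * v))
      = spanSingleton (𝓞 K)⁰ (2 : K) * P * (codifferent K * k ^ 2) *
          (spanSingleton (𝓞 K)⁰ u * spanSingleton (𝓞 K)⁰ v) := by
        simp only [← spanSingleton_mul_spanSingleton, hc]
        ring
    _ ≤ spanSingleton (𝓞 K)⁰ (2 : K) * P * (codifferent K * k ^ 2) *
          ((a * k)⁻¹ * (b * k)⁻¹) := by
        gcongr
        · exact spanSingleton_le_iff_mem.2 hu
        · exact spanSingleton_le_iff_mem.2 hv
    _ = codifferent K * t := by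
        rw [ht']
        field_simp

end TraceLattice

section LocalGaussSums

open FractionalIdeal

theorem traceQuad_smul (c x : K) (r : 𝓞 K) :
    traceQuad ℚ c (r • x) = traceQuad ℚ (c * x ^ 2) (r : K) := by
  rw [traceQuad_apply, traceQuad_apply, Algebra.smul_def]
  congr 1
  ring

theorem sum_expRat_traceQuad_prime {p : Ideal (𝓞 K)} [p.IsMaximal] [Fintype (𝓞 K ⧸ p)]
    (h2 : 2 ∉ p) {α : 𝓞 K} (hα : α ∉ p) {b : K}
    (hb : ∀ y ∈ p, ∃ z : ℤ, Algebra.trace ℚ K (b * y) = z) (hb' : b ∉ codifferent K) :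
    ∑ r : 𝓞 K ⧸ p, expRat (traceQuad ℚ (α * b) ((r.out : 𝓞 K) : K)) =
      residueSymbol α p * ∑ r : 𝓞 K ⧸ p, expRat (traceQuad ℚ b ((r.out : 𝓞 K) : K)) := by
  let χ : AddChar (𝓞 K) ℂ :=
    { toFun := fun y => expRat (Algebra.trace ℚ K (b * y))
      map_zero_eq_one' := by simp [expRat_zero]
      map_add_eq_mul' := fun y z => by simp [mul_add, expRat_add] }
  obtain ⟨ψ, hψ⟩ := exists_addChar_quotient (χ := χ) fun y hy => expRat_eq_one_iff.2 (hb y hy)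
  have hψ₁ : ψ ≠ 1 := by
    rintro rfl
    exact hb' (mem_codifferent_iff.2 fun y => expRat_eq_one_iff.1 (hψ y).symm)
  have hterm (β : 𝓞 K) (r : 𝓞 K ⧸ p) :
      expRat (traceQuad ℚ (β * b) ((r.out : 𝓞 K) : K)) = ψ (Ideal.Quotient.mk p β * r ^ 2) := by
    rw [← Ideal.Quotient.mk_out r, ← map_pow, ← map_mul, hψ, Ideal.Quotient.mk_out, traceQuad_apply]
    simp only [χ, AddChar.coe_mk, map_mul, map_pow]
    congr 2
    ring
  have hone := hterm 1
  simp only [map_one, one_mul] at hone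
  simp only [hterm α, hone]
  exact sum_addChar_mul_sq h2 hα hψ₁

theorem exists_isTransversal_prime {p s : Ideal (𝓞 K)} [p.IsMaximal] [Fintype (𝓞 K ⧸ p)]
    (h2 : 2 ∉ p) (hp : p ≠ ⊥) (hs : ¬ s ≤ p) {k : FractionalIdeal (𝓞 K)⁰ K} (hk : k ≠ 0) {c : K}
    (hc : spanSingleton (𝓞 K)⁰ c = codifferent K * ((p * s : Ideal (𝓞 K)) * k ^ 2)) :
    ∃ f : 𝓞 K ⧸ p → K,
      IsTransversal f (idealLattice (p * k : FractionalIdeal (𝓞 K)⁰ K)⁻¹) (idealLattice k⁻¹) ∧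
      ∀ α ∉ p, ∑ r, expRat (traceQuad ℚ (α * c) (f r)) =
        residueSymbol α p * ∑ r, expRat (traceQuad ℚ c (f r)) := by
  obtain ⟨x, J, hJ, hJp⟩ := exists_coeIdeal_eq_spanSingleton_mul_isCoprime hp hk
  refine ⟨_, isTransversal_out_smul hp hk hJ hJp, fun α hα => ?_⟩
  have hp' := coeIdeal_ne_zero (K := K).2 hp
  have hspan : spanSingleton (𝓞 K)⁰ (c * x ^ 2) =
      codifferent K * (p : FractionalIdeal (𝓞 K)⁰ K)⁻¹ * (s * J ^ 2 : Ideal (𝓞 K)) := by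
    simp only [coeIdeal_mul, coeIdeal_pow, hJ] at hc ⊢
    rw [← spanSingleton_mul_spanSingleton, ← spanSingleton_pow, hc]
    field_simp
  have hmem : c * x ^ 2 ∈ codifferent K * (p : FractionalIdeal (𝓞 K)⁰ K)⁻¹ := by
    rw [← spanSingleton_le_iff_mem, hspan]
    exact (mul_le_mul_right coeIdeal_le_one _).trans_eq (mul_one _)
  have hnmem : c * x ^ 2 ∉ codifferent K := by
    intro h
    rw [← spanSingleton_le_iff_mem, hspan] at h
    have hle : s * J ^ 2 ≤ p := by
      rw [← coeIdeal_le_coeIdeal K]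
      have hd := codifferent_ne_zero (K := K)
      calc ((s * J ^ 2 : Ideal (𝓞 K)) : FractionalIdeal (𝓞 K)⁰ K)
          = (codifferent K)⁻¹ * p * (codifferent K * (p : FractionalIdeal (𝓞 K)⁰ K)⁻¹ *
              (s * J ^ 2 : Ideal (𝓞 K))) := by field_simp
        _ ≤ (codifferent K)⁻¹ * p * codifferent K := mul_le_mul_right h _
        _ = p := by field_simp
    have hprime : p.IsPrime := inferInstance
    have hJ_le := hprime.le_of_pow_le ((hprime.mul_le.1 hle).resolve_left hs)
    exact hprime.ne_top (Ideal.isCoprime_iff_sup_eq.1 hJp ▸ (sup_eq_right.2 hJ_le).symm)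
  rw [mem_codifferent_mul_inv_iff hp'] at hmem
  simp only [traceQuad_smul, mul_assoc]
  exact sum_expRat_traceQuad_prime h2 hα (fun y hy => hmem y (mem_coeIdeal_of_mem _ hy)) hnmem

end LocalGaussSums

section DyadicGaussSum

theorem isUnit_mk_span_singleton_iff {R : Type*} [CommRing R] {x m : R} :
    IsUnit (Ideal.Quotient.mk (Ideal.span {m}) x) ↔ IsCoprime x m := by
  rw [isUnit_iff_exists_inv, Ideal.Quotient.mk_surjective.exists]
  simp only [← map_mul, ← map_one (Ideal.Quotient.mk (Ideal.span {m})), Ideal.Quotient.eq,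
    Ideal.mem_span_singleton']
  constructor
  · rintro ⟨a, b, hab⟩
    exact ⟨a, -b, by linear_combination -hab⟩
  · rintro ⟨a, b, hab⟩
    exact ⟨a, -b, by linear_combination -hab⟩

noncomputable instance : Fintype (𝓞 K ⧸ Ideal.span {(2 : 𝓞 K)}) :=
  have : Finite (𝓞 K ⧸ Ideal.span {(2 : 𝓞 K)}) :=
    Ring.HasFiniteQuotients.finiteQuotient (by simp)
  Fintype.ofFinite _

/-- The Gauss sum `∑ e(Tr(c r² / 4))` over `r` modulo `2`, for `c` in the inverse different. -/
noncomputable def dyadicGaussSum (c : K) : ℂ :=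
  ∑ r : 𝓞 K ⧸ Ideal.span {(2 : 𝓞 K)}, expRat (traceQuad ℚ c ((r.out : 𝓞 K) • (1 / 2 : K)))

theorem dyadicGaussSum_add_four_mul (c : K) {d : K} (hd : d ∈ codifferent K) :
    dyadicGaussSum (c + 4 * d) = dyadicGaussSum c := by
  refine Finset.sum_congr rfl fun r _ => ?_
  obtain ⟨z, hz⟩ := mem_codifferent_iff.1 hd (r.out ^ 2 : 𝓞 K)
  have hsplit : (c + 4 * d) * ((r.out : 𝓞 K) • (1 / 2 : K)) ^ 2 =
      c * ((r.out : 𝓞 K) • (1 / 2 : K)) ^ 2 + d * ((r.out ^ 2 : 𝓞 K) : K) := by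
    simp only [Algebra.smul_def, map_pow]
    ring
  rw [traceQuad_apply, hsplit, map_add, hz, expRat_add, expRat_intCast, mul_one, ← traceQuad_apply]

theorem expRat_traceQuad_half_congr {c : K} (hc : c ∈ codifferent K) {w w' : 𝓞 K}
    (hw : Ideal.Quotient.mk (Ideal.span {2}) w = Ideal.Quotient.mk (Ideal.span {2}) w') :
    expRat (traceQuad ℚ c (w • (1 / 2 : K))) = expRat (traceQuad ℚ c (w' • (1 / 2 : K))) := by
  obtain ⟨t, ht⟩ := Ideal.mem_span_singleton.1 (Ideal.Quotient.eq.1 hw)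
  obtain rfl : w = w' + 2 * t := by rw [← ht]; ring
  obtain ⟨z, hz⟩ := mem_codifferent_iff.1 hc (w' * t + t ^ 2)
  have hsplit : c * ((w' + 2 * t) • (1 / 2 : K)) ^ 2 =
      c * (w' • (1 / 2 : K)) ^ 2 + c * ((w' * t + t ^ 2 : 𝓞 K) : K) := by
    simp only [Algebra.smul_def, map_add, map_mul, map_pow, map_ofNat]
    ring
  rw [traceQuad_apply, hsplit, map_add, hz, expRat_add, expRat_intCast, mul_one, ← traceQuad_apply]

theorem dyadicGaussSum_mul_sq {c : K} (hc : c ∈ codifferent K) {y : 𝓞 K} (hy : IsCoprime y 2) :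
    dyadicGaussSum (c * (y : K) ^ 2) = dyadicGaussSum c := by
  have hunit : IsUnit (Ideal.Quotient.mk (Ideal.span {2}) y) :=
    isUnit_mk_span_singleton_iff.2 hy
  refine Fintype.sum_equiv (Units.mulRight hunit.unit) _ _ fun r => ?_
  have hmove : traceQuad ℚ (c * (y : K) ^ 2) ((r.out : 𝓞 K) • (1 / 2 : K)) =
      traceQuad ℚ c ((r.out * y) • (1 / 2 : K)) := by
    simp only [traceQuad_apply, Algebra.smul_def, map_mul]
    congr 1
    ring
  rw [hmove]
  refine expRat_traceQuad_half_congr hc ?_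
  simp [Ideal.Quotient.mk_out]

end DyadicGaussSum

section Reciprocity

open FractionalIdeal

theorem sum_expRat_add {V ι κ : Type*} [AddCommGroup V] [Module ℚ V] [Fintype ι] [Fintype κ]
    (Q : QuadraticForm ℚ V) {f : ι → V} {g : κ → V}
    (hfg : ∀ i j, ∃ z : ℤ, QuadraticMap.polar Q (f i) (g j) = z) :
    ∑ p : ι × κ, expRat (Q (f p.1 + g p.2)) =
      (∑ i, expRat (Q (f i))) * ∑ j, expRat (Q (g j)) := by
  rw [Fintype.sum_mul_sum, Fintype.sum_prod_type]
  refine Finset.sum_congr rfl fun i _ => Finset.sum_congr rfl fun j _ => ?_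
  rw [expRat_apply_add, expRat_eq_one_iff.2 (hfg i j), mul_one]

theorem prod_not_le_of_notMem {T : Finset (Ideal (𝓞 K))} (hT : ∀ q ∈ T, Prime q)
    {p : Ideal (𝓞 K)} (hp : Prime p) (hpT : p ∉ T) : ¬ ∏ q ∈ T, q ≤ p := fun h => by
  have := Ideal.isPrime_of_prime hp
  obtain ⟨q, hq, hqp⟩ := Ideal.IsPrime.prod_le (s := T) (f := id) (P := p) this |>.1 h
  have := Ideal.isPrime_of_prime (hT q hq)
  have hqmax : q.IsMaximal := Ring.DimensionLEOne.maximalOfPrime (hT q hq).ne_zero this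
  exact hpT (hqmax.eq_of_le (Ideal.IsPrime.ne_top ‹_›) hqp ▸ hq)

theorem spanSingleton_units_mul (α : (𝓞 K)ˣ) (c : K) :
    spanSingleton (𝓞 K)⁰ ((α : 𝓞 K) * c) = spanSingleton (𝓞 K)⁰ c := by
  rw [← spanSingleton_mul_spanSingleton, ← coeIdeal_span_singleton,
    Ideal.span_singleton_eq_top.2 α.isUnit, coeIdeal_top, one_mul]

universe u

/-- The Gauss sums of `Tr(c x²)` and of `Tr(α c x²)` over `(a k)⁻¹ / k⁻¹` are the dyadic Gauss sums
of `c` and `α c`, times a common factor and, for the second one, the sign `ε`. -/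
def GaussSumsFactor {K : Type u} [Field K] [NumberField K] (α : (𝓞 K)ˣ) (c : K)
    (k : FractionalIdeal (𝓞 K)⁰ K) (a : Ideal (𝓞 K)) (ε : ℤˣ) : Prop :=
  ∃ (ι : Type u) (_ : Fintype ι) (f : ι → K) (g : ℂ),
    IsTransversal f (idealLattice (a * k : FractionalIdeal (𝓞 K)⁰ K)⁻¹) (idealLattice k⁻¹) ∧
    ∑ i, expRat (traceQuad ℚ c (f i)) = dyadicGaussSum c * g ∧
    ∑ i, expRat (traceQuad ℚ ((α : 𝓞 K) * c) (f i)) = ε * dyadicGaussSum ((α : 𝓞 K) * c) * g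

theorem gaussSumsFactor_two {k : Ideal (𝓞 K)} (hk : k ≠ ⊥) (hk2 : IsCoprime k (Ideal.span {2}))
    (α : (𝓞 K)ˣ) (c : K) : GaussSumsFactor α c k (Ideal.span {2}) 1 := by
  have hhalf : (k : FractionalIdeal (𝓞 K)⁰ K) =
      spanSingleton (𝓞 K)⁰ (1 / 2 : K) * ((Ideal.span {(2 : 𝓞 K)} : Ideal (𝓞 K)) * k) := by
    rw [coeIdeal_span_singleton, ← mul_assoc, spanSingleton_mul_spanSingleton, map_ofNat,
      one_div, inv_mul_cancel₀ two_ne_zero, spanSingleton_one, one_mul]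
  refine ⟨_, inferInstance, _, 1,
    isTransversal_out_smul (by simp) (coeIdeal_ne_zero.2 hk) hhalf hk2, (mul_one _).symm, ?_⟩
  simp [dyadicGaussSum]

theorem GaussSumsFactor.mul_prime {α : (𝓞 K)ˣ} {c : K} {k : FractionalIdeal (𝓞 K)⁰ K}
    {a : Ideal (𝓞 K)} {ε : ℤˣ} (h : GaussSumsFactor α c k a ε) (hk : k ≠ 0) (ha : a ≠ ⊥)
    {p s : Ideal (𝓞 K)} (hp : Prime p) (h2 : 2 ∉ p) (hap : ¬ a ≤ p) (hs : ¬ s ≤ p)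
    (hc : spanSingleton (𝓞 K)⁰ c = codifferent K * ((p * s : Ideal (𝓞 K)) * k ^ 2))
    (hdvd : a * p ∣ Ideal.span {2} * (p * s)) :
    GaussSumsFactor α c k (a * p) (ε * residueSymbol (α : 𝓞 K) p) := by
  have hprime := Ideal.isPrime_of_prime hp
  have hmax : p.IsMaximal := Ring.DimensionLEOne.maximalOfPrime hp.ne_zero hprime
  have : Finite (𝓞 K ⧸ p) := Ring.HasFiniteQuotients.finiteQuotient hp.ne_zero
  let := Fintype.ofFinite (𝓞 K ⧸ p)
  have hcop : IsCoprime a p := Ideal.isCoprime_iff_sup_eq.2 <|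
    hmax.out.2 _ (right_lt_sup.2 hap)
  have hα : (α : 𝓞 K) ∉ p := fun h => hprime.ne_top (p.eq_top_of_isUnit_mem h α.isUnit)
  have hcα := (spanSingleton_units_mul α c).trans hc
  obtain ⟨ι, _, f, g, hf, hfc, hfα⟩ := h
  obtain ⟨f', hf', hsum⟩ := exists_isTransversal_prime h2 hp.ne_zero hs hk hc
  refine ⟨ι × (𝓞 K ⧸ p), inferInstance, fun i => f i.1 + f' i.2,
    g * ∑ r, expRat (traceQuad ℚ c (f' r)), ?_, ?_, ?_⟩
  · rw [← idealLattice_sup_of_isCoprime ha hp.ne_zero hcop]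
    exact hf.sup hf' (idealLattice_inf_of_isCoprime ha hp.ne_zero hcop)
  · rw [sum_expRat_add _ fun i j => exists_polar_traceQuad_eq ha hp.ne_zero hk hdvd hc
      (hf.mem i) (hf'.mem j), hfc, mul_assoc]
  · rw [sum_expRat_add _ fun i j => exists_polar_traceQuad_eq ha hp.ne_zero hk hdvd hcα
      (hf.mem i) (hf'.mem j), hfα, hsum _ hα]
    push_cast
    ring

variable {S : Finset (Ideal (𝓞 K))} {k : Ideal (𝓞 K)} {c : K}

theorem gaussSumsFactor_prod (hS : ∀ p ∈ S, Prime p ∧ 2 ∉ p) (hk : k ≠ ⊥)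
    (hk2 : IsCoprime k (Ideal.span {2})) (α : (𝓞 K)ˣ)
    (hc : spanSingleton (𝓞 K)⁰ c = codifferent K *
      ((∏ p ∈ S, p : Ideal (𝓞 K)) * (k : FractionalIdeal (𝓞 K)⁰ K) ^ 2))
    {T : Finset (Ideal (𝓞 K))} (hTS : T ⊆ S) :
    GaussSumsFactor α c k (Ideal.span {2} * ∏ p ∈ T, p)
      (∏ p ∈ T, residueSymbol (α : 𝓞 K) p) := by
  classical
  induction T using Finset.induction_on with
  | empty => simpa using gaussSumsFactor_two hk hk2 α c
  | insert p T hpT ih =>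
    obtain ⟨hpS, hTS'⟩ := Finset.insert_subset_iff.1 hTS
    obtain ⟨hp, h2⟩ := hS p hpS
    have hprod : p * ∏ q ∈ S.erase p, q = ∏ q ∈ S, q := Finset.mul_prod_erase S id hpS
    have hdvd : p * ∏ q ∈ T, q ∣ ∏ q ∈ S, q := by
      rw [← Finset.prod_insert (f := fun q => q) hpT]
      exact Finset.prod_dvd_prod_of_subset _ _ _ hTS
    rw [Finset.prod_insert hpT, Finset.prod_insert hpT, mul_comm p, ← mul_assoc,
      mul_comm (residueSymbol _ p)]
    refine (ih hTS').mul_prime (coeIdeal_ne_zero.2 hk) ?_ hp h2 (fun h => ?_)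
      (prod_not_le_of_notMem (fun q hq => (hS q (Finset.mem_of_mem_erase hq)).1) hp
        (Finset.notMem_erase p S)) (by rwa [hprod]) ?_
    · exact mul_ne_zero (by simp)
        (Finset.prod_ne_zero_iff.2 fun q hq => (hS q (hTS' hq)).1.ne_zero)
    · rcases (Ideal.isPrime_of_prime hp).mul_le.1 h with h | h
      · exact h2 (h (Ideal.mem_span_singleton_self 2))
      · exact prod_not_le_of_notMem (fun q hq => (hS q (hTS' hq)).1) hp hpT h
    · rw [hprod, mul_assoc, mul_comm _ p]
      exact mul_dvd_mul_left _ hdvd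

theorem exists_pos_prod_residueSymbol_mul_dyadicGaussSum (hS : ∀ p ∈ S, Prime p ∧ 2 ∉ p)
    (hk : k ≠ ⊥) (hk2 : IsCoprime k (Ideal.span {2})) {α : (𝓞 K)ˣ} (hα : α ∈ totPosUnits K)
    (hc : spanSingleton (𝓞 K)⁰ c = codifferent K *
      ((∏ p ∈ S, p : Ideal (𝓞 K)) * (k : FractionalIdeal (𝓞 K)⁰ K) ^ 2)) :
    dyadicGaussSum c ≠ 0 ∧ ∃ r : ℝ, 0 < r ∧
      (∏ p ∈ S, residueSymbol (α : 𝓞 K) p : ℤˣ) * dyadicGaussSum ((α : 𝓞 K) * c) =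
        r * dyadicGaussSum c := by
  have hk' := coeIdeal_ne_zero (K := K).2 hk
  have hP : ∏ p ∈ S, p ≠ ⊥ := Finset.prod_ne_zero_iff.2 fun p hp => (hS p hp).1.ne_zero
  have hcα := (spanSingleton_units_mul α c).trans hc
  have hfull := exists_pos_nsmul_mem_idealLattice (inv_ne_zero hk')
  obtain ⟨ι, _, f, g, hf, hfc, hfα⟩ := gaussSumsFactor_prod hS hk hk2 α hc subset_rfl
  obtain ⟨hne, r, hr, heq⟩ := exists_sum_expRat_traceQuad_eq_mul
    (ne_zero_of_spanSingleton_eq_codifferent_mul hP hk' hc)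
    (RingOfIntegers.coe_ne_zero_iff.2 α.ne_zero) hα
    (fun _ => exists_traceQuad_eq_of_mem_inv hk' hc)
    (fun _ => exists_traceQuad_eq_of_mem_inv hk' hcα)
    hfull hfull ((dualLattice_traceQuad_idealLattice hP hk' hc) ▸ hf)
    ((dualLattice_traceQuad_idealLattice hP hk' hcα) ▸ hf)
  rw [hfc] at hne
  refine ⟨left_ne_zero_of_mul hne, r, hr, mul_right_cancel₀ (right_ne_zero_of_mul hne) ?_⟩
  rw [← hfα, heq, hfc, mul_assoc]

end Reciprocity

section IdealSymbol

open UniqueFactorizationMonoid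

variable {R : Type*} [CommRing R] [IsDedekindDomain R]

/-- The quadratic residue symbol of a unit `α`, extended multiplicatively to all nonzero ideals. -/
noncomputable def idealSymbol (α : Rˣ) (I : Ideal R) : ℤˣ :=
  ((normalizedFactors I).map (residueSymbol (α : R))).prod

theorem idealSymbol_mul (α : Rˣ) {I J : Ideal R} (hI : I ≠ ⊥) (hJ : J ≠ ⊥) :
    idealSymbol α (I * J) = idealSymbol α I * idealSymbol α J := by
  rw [idealSymbol, normalizedFactors_mul hI hJ, Multiset.map_add, Multiset.prod_add]
  rfl

theorem idealSymbol_one (α : Rˣ) : idealSymbol α 1 = 1 := by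
  rw [idealSymbol, normalizedFactors_one, Multiset.map_zero, Multiset.prod_zero]

theorem idealSymbol_of_prime (α : Rˣ) {p : Ideal R} (hp : Prime p) :
    idealSymbol α p = residueSymbol (α : R) p := by
  rw [idealSymbol, normalizedFactors_irreducible hp.irreducible, normalize_eq,
    Multiset.map_singleton, Multiset.prod_singleton]

theorem one_idealSymbol (I : Ideal R) : idealSymbol 1 I = 1 := by
  have hone (p : Ideal R) : residueSymbol ((1 : Rˣ) : R) p = 1 :=
    residueSymbol_eq_one_iff.2 (by simp)
  simp only [idealSymbol, hone, Multiset.map_const', Multiset.prod_replicate, one_pow]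

theorem mul_idealSymbol [Ring.HasFiniteQuotients R] (α β : Rˣ) (I : Ideal R) :
    idealSymbol (α * β) I = idealSymbol α I * idealSymbol β I := by
  rw [idealSymbol, idealSymbol, idealSymbol, ← Multiset.prod_map_mul]
  congr 1
  refine Multiset.map_congr rfl fun p hp => ?_
  have hprime := prime_of_normalized_factor p hp
  have hp' := Ideal.isPrime_of_prime hprime
  have := Ring.DimensionLEOne.maximalOfPrime hprime.ne_zero hp'
  have : Finite (R ⧸ p) := Ring.HasFiniteQuotients.finiteQuotient hprime.ne_zero
  have hunit (γ : Rˣ) : (γ : R) ∉ p := fun h => hp'.ne_top (p.eq_top_of_isUnit_mem h γ.isUnit)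
  rw [Units.val_mul, residueSymbol_mul (hunit α) (hunit β)]

theorem idealSymbol_prod (α : Rˣ) {S : Finset (Ideal R)} (hS : ∀ p ∈ S, Prime p) :
    idealSymbol α (∏ p ∈ S, p) = ∏ p ∈ S, residueSymbol (α : R) p := by
  classical
  induction S using Finset.induction_on with
  | empty => exact idealSymbol_one α
  | insert p S hpS ih =>
    obtain ⟨hp, hS'⟩ := Finset.forall_mem_insert _ _ _ |>.1 hS
    rw [Finset.prod_insert hpS, Finset.prod_insert hpS,
      idealSymbol_mul α hp.ne_zero (Finset.prod_ne_zero_iff.2 fun q hq => (hS' q hq).ne_zero),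
      idealSymbol_of_prime α hp, ih hS']

theorem exists_eq_prod_mul_sq {J : Ideal R} (hJ : J ≠ ⊥) :
    ∃ (S : Finset (Ideal R)) (k : Ideal R), (∀ p ∈ S, Prime p) ∧ J = (∏ p ∈ S, p) * k ^ 2 := by
  classical
  induction J using induction_on_prime with
  | h₁ => exact absurd rfl hJ
  | h₂ J hunit =>
    exact ⟨∅, 1, by simp, by rw [Finset.prod_empty, one_mul, one_pow, Ideal.isUnit_iff.1 hunit,
      Ideal.one_eq_top]⟩
  | h₃ J p hJ' hp ih =>
    obtain ⟨S, k, hS, rfl⟩ := ih hJ'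
    by_cases hpS : p ∈ S
    · refine ⟨S.erase p, p * k, fun q hq => hS q (Finset.mem_of_mem_erase hq), ?_⟩
      rw [← Finset.mul_prod_erase S (fun q => q) hpS]
      ring
    · exact ⟨insert p S, k, (Finset.forall_mem_insert _ _ _).2 ⟨hp, hS⟩,
        by rw [Finset.prod_insert hpS, mul_assoc]⟩

theorem idealSymbol_prod_mul_sq (α : Rˣ) {S : Finset (Ideal R)} (hS : ∀ p ∈ S, Prime p)
    {k : Ideal R} (hk : k ≠ ⊥) :
    idealSymbol α ((∏ p ∈ S, p) * k ^ 2) = ∏ p ∈ S, residueSymbol (α : R) p := by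
  rw [idealSymbol_mul α (Finset.prod_ne_zero_iff.2 fun p hp => (hS p hp).ne_zero)
      (pow_ne_zero 2 hk),
    pow_two k, idealSymbol_mul α hk hk, ← pow_two (idealSymbol α k), Int.units_sq, mul_one,
    idealSymbol_prod α hS]

end IdealSymbol

section Supplements

open FractionalIdeal

theorem notMem_of_isCoprime_span {R : Type*} [CommRing R] {I : Ideal R} {x : R}
    (h : IsCoprime I (Ideal.span {x})) (hI : I ≠ ⊤) : x ∉ I := fun hx =>
  hI <| by rw [← Ideal.isCoprime_iff_sup_eq.1 h, eq_comm, sup_eq_left,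
    Ideal.span_singleton_le_iff_mem]; exact hx

theorem ne_bot_of_isCoprime_two {I : Ideal (𝓞 K)} (h : IsCoprime I (Ideal.span {2})) : I ≠ ⊥ := by
  rintro rfl
  rw [Ideal.isCoprime_iff_sup_eq, bot_sup_eq, Ideal.span_singleton_eq_top,
    ← map_ofNat (algebraMap ℤ (𝓞 K)) 2, isUnit_map_iff] at h
  exact Int.prime_two.not_isUnit h

theorem exists_pos_idealSymbol_mul_dyadicGaussSum {J : Ideal (𝓞 K)}
    (hJ : IsCoprime J (Ideal.span {2})) {α : (𝓞 K)ˣ} (hα : α ∈ totPosUnits K) {c : K}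
    (hc : spanSingleton (𝓞 K)⁰ c = codifferent K * J) :
    dyadicGaussSum c ≠ 0 ∧ ∃ r : ℝ, 0 < r ∧
      idealSymbol α J * dyadicGaussSum ((α : 𝓞 K) * c) = r * dyadicGaussSum c := by
  obtain ⟨S, k, hS, rfl⟩ := exists_eq_prod_mul_sq (ne_bot_of_isCoprime_two hJ)
  have hk2 : IsCoprime k (Ideal.span {2}) :=
    hJ.of_isCoprime_of_dvd_left ((dvd_pow_self k two_ne_zero).mul_left _)
  have hk := ne_bot_of_isCoprime_two hk2
  rw [idealSymbol_prod_mul_sq α hS hk]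
  refine exists_pos_prod_residueSymbol_mul_dyadicGaussSum (fun p hp => ⟨hS p hp, ?_⟩) hk hk2 hα
    (by rw [hc, coeIdeal_mul, coeIdeal_pow])
  exact notMem_of_isCoprime_span
    (hJ.of_isCoprime_of_dvd_left ((Finset.dvd_prod_of_mem (fun q => q) hp).mul_right _))
    (Ideal.isPrime_of_prime (hS p hp)).ne_top

theorem exists_spanSingleton_eq_codifferent_mul :
    ∃ (c : K) (J : Ideal (𝓞 K)), IsCoprime J (Ideal.span {2}) ∧
      spanSingleton (𝓞 K)⁰ c = codifferent K * J := by
  have hd := codifferent_ne_zero (K := K)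
  have h2 : (Ideal.span {(2 : 𝓞 K)} : FractionalIdeal (𝓞 K)⁰ K) ≠ 0 :=
    coeIdeal_ne_zero.2 (by simp)
  obtain ⟨x, J, hJ, hJ2⟩ := exists_coeIdeal_eq_spanSingleton_mul_isCoprime
    (a := Ideal.span {(2 : 𝓞 K)}) (by simp) (inv_ne_zero (mul_ne_zero h2 hd))
  refine ⟨x, J, hJ2, ?_⟩
  rw [hJ]
  field_simp

theorem dyadicGaussSum_mul_of_isSquare_mk {x : 𝓞 K} (hx : IsCoprime x 2)
    (hsq : IsSquare (Ideal.Quotient.mk (Ideal.span {4}) x)) {c : K} (hc : c ∈ codifferent K) :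
    dyadicGaussSum (x * c) = dyadicGaussSum c := by
  obtain ⟨z, hz⟩ := hsq
  obtain ⟨y, rfl⟩ := Ideal.Quotient.mk_surjective z
  rw [← map_mul, Ideal.Quotient.eq, Ideal.mem_span_singleton] at hz
  obtain ⟨m, hm⟩ := hz
  obtain rfl : x = y ^ 2 + 4 * m := by rw [← hm]; ring
  have hy : IsCoprime y 2 := by
    obtain ⟨a, b, hab⟩ := hx
    exact ⟨a * y, b + 2 * a * m, by rw [← hab]; ring⟩
  have hsplit : ((y ^ 2 + 4 * m : 𝓞 K) : K) * c = c * (y : K) ^ 2 + 4 * (m • c) := by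
    simp only [Algebra.smul_def, map_add, map_mul, map_pow, map_ofNat]
    ring
  rw [hsplit, dyadicGaussSum_add_four_mul _ (smul_mem_fractionalIdeal m hc),
    dyadicGaussSum_mul_sq hc hy]

theorem eq_one_of_mul_eq_of_pos {a : ℤˣ} {z : ℂ} (hz : z ≠ 0) {r s : ℝ} (hr : 0 < r) (hs : 0 < s)
    (h : (a : ℂ) * (s * z) = r * z) : a = 1 := by
  rcases Int.units_eq_one_or a with rfl | rfl
  · rfl
  · have hneg : -s = r := by
      rw [← mul_assoc] at h
      have hcancel := mul_right_cancel₀ hz h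
      push_cast at hcancel
      rw [neg_one_mul] at hcancel
      exact mod_cast hcancel
    linarith

theorem spanSingleton_mul_eq_codifferent_mul {c : K} {J : Ideal (𝓞 K)}
    (hc : spanSingleton (𝓞 K)⁰ c = codifferent K * J) (x : 𝓞 K) :
    spanSingleton (𝓞 K)⁰ (x * c) = codifferent K * (Ideal.span {x} * J : Ideal (𝓞 K)) := by
  rw [← spanSingleton_mul_spanSingleton, hc, coeIdeal_mul, coeIdeal_span_singleton, mul_left_comm]

theorem mem_codifferent_of_spanSingleton_eq {c : K} {J : Ideal (𝓞 K)}
    (hc : spanSingleton (𝓞 K)⁰ c = codifferent K * J) : c ∈ codifferent K := by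
  rw [← spanSingleton_le_iff_mem, hc]
  exact (mul_le_mul_right coeIdeal_le_one _).trans_eq (mul_one _)

variable {α : (𝓞 K)ˣ} {x : 𝓞 K}

theorem idealSymbol_span_of_isSquare_mk (hα : α ∈ totPosUnits K) (hx : IsCoprime x 2)
    (hsq : IsSquare (Ideal.Quotient.mk (Ideal.span {4}) x)) :
    idealSymbol α (Ideal.span {x}) = 1 := by
  obtain ⟨c, J, hJ, hc⟩ := exists_spanSingleton_eq_codifferent_mul (K := K)
  have hcd := mem_codifferent_of_spanSingleton_eq hc
  have hx' := (Ideal.isCoprime_span_singleton_iff x 2).2 hx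
  obtain ⟨hne, s, hs, hJsum⟩ := exists_pos_idealSymbol_mul_dyadicGaussSum hJ hα hc
  obtain ⟨-, r, hr, hxsum⟩ := exists_pos_idealSymbol_mul_dyadicGaussSum (hx'.mul_left hJ) hα
    (spanSingleton_mul_eq_codifferent_mul hc x)
  refine eq_one_of_mul_eq_of_pos hne hr hs ?_
  rw [← hJsum, ← dyadicGaussSum_mul_of_isSquare_mk hx hsq hcd, ← hxsum,
    idealSymbol_mul α (ne_bot_of_isCoprime_two hx') (ne_bot_of_isCoprime_two hJ),
    mul_left_comm ((α : 𝓞 K) : K),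
    dyadicGaussSum_mul_of_isSquare_mk hx hsq
      (Algebra.smul_def (α : 𝓞 K) c ▸ smul_mem_fractionalIdeal _ hcd)]
  push_cast
  ring

theorem idealSymbol_eq_one_of_isSquare_mk (hα : α ∈ totPosUnits K)
    (hsq : IsSquare (Ideal.Quotient.mk (Ideal.span {4}) (α : 𝓞 K))) {J : Ideal (𝓞 K)}
    (hJ : IsCoprime J (Ideal.span {2})) {c : K}
    (hc : spanSingleton (𝓞 K)⁰ c = codifferent K * J) : idealSymbol α J = 1 := by
  obtain ⟨hne, r, hr, hsum⟩ := exists_pos_idealSymbol_mul_dyadicGaussSum hJ hα hc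
  rw [dyadicGaussSum_mul_of_isSquare_mk
      (isCoprime_one_left.of_isCoprime_of_dvd_left α.isUnit.dvd) hsq
    (mem_codifferent_of_spanSingleton_eq hc)] at hsum
  exact eq_one_of_mul_eq_of_pos hne hr one_pos (by rw [Complex.ofReal_one, one_mul, hsum])

theorem idealSymbol_span_of_isSquare_mk_unit (hα : α ∈ totPosUnits K)
    (hsq : IsSquare (Ideal.Quotient.mk (Ideal.span {4}) (α : 𝓞 K))) (hx : IsCoprime x 2) :
    idealSymbol α (Ideal.span {x}) = 1 := by
  obtain ⟨c, J, hJ, hc⟩ := exists_spanSingleton_eq_codifferent_mul (K := K)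
  have hx' := (Ideal.isCoprime_span_singleton_iff x 2).2 hx
  have hxJ := idealSymbol_eq_one_of_isSquare_mk hα hsq (hx'.mul_left hJ)
    (spanSingleton_mul_eq_codifferent_mul hc x)
  rwa [idealSymbol_mul α (ne_bot_of_isCoprime_two hx') (ne_bot_of_isCoprime_two hJ),
    idealSymbol_eq_one_of_isSquare_mk hα hsq hJ hc, mul_one] at hxJ

end Supplements

section EulerProduct

open Filter Topology ENNReal UniqueFactorizationMonoid

variable {ι κ : Type*}

/-- The Euler product `∏ i, (1 - w i)⁻¹` in expanded form: the sum over all finite multisets of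
indices of the product of the weights. As a sum in `ℝ≥0∞` it needs no convergence hypothesis. -/
noncomputable def eulerSum (w : ι → ℝ≥0∞) : ℝ≥0∞ :=
  ∑' m : Multiset ι, (m.map w).prod

theorem eulerSum_eq_tsum_finsupp (w : ι → ℝ≥0∞) :
    eulerSum w = ∑' f : ι →₀ ℕ, f.prod fun i n => w i ^ n := by
  classical
  rw [eulerSum, ← Multiset.toFinsupp.symm.toEquiv.tsum_eq]
  refine tsum_congr fun f => ?_
  change ((Finsupp.toMultiset f).map w).prod = _
  rw [Finsupp.toMultiset_map, Finsupp.prod_toMultiset,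
    Finsupp.prod_mapDomain_index (fun _ => pow_zero _) fun _ _ _ => pow_add _ _ _]

theorem eulerSum_sum (w : ι ⊕ κ → ℝ≥0∞) :
    eulerSum w = eulerSum (w ∘ Sum.inl) * eulerSum (w ∘ Sum.inr) := by
  simp only [eulerSum_eq_tsum_finsupp]
  rw [← Finsupp.sumFinsuppEquivProdFinsupp.symm.tsum_eq, ENNReal.tsum_prod',
    ← ENNReal.tsum_mul_right]
  refine tsum_congr fun f => ?_
  rw [← ENNReal.tsum_mul_left]
  exact tsum_congr fun g => Finsupp.prod_sumElim f g _

theorem eulerSum_comp_equiv (e : ι ≃ κ) (w : κ → ℝ≥0∞) : eulerSum (w ∘ e) = eulerSum w := by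
  have hmap : Function.Bijective (Multiset.map e) :=
    ⟨Multiset.map_injective e.injective, fun m => ⟨m.map e.symm, by simp⟩⟩
  rw [eulerSum, eulerSum, ← (Equiv.ofBijective _ hmap).tsum_eq]
  simp [Multiset.map_map]

theorem eulerSum_of_unique [Unique ι] (w : ι → ℝ≥0∞) : eulerSum w = (1 - w default)⁻¹ := by
  rw [eulerSum_eq_tsum_finsupp, ← (Finsupp.uniqueEquiv (M := ℕ) (default : ι)).symm.tsum_eq,
    ← ENNReal.tsum_geometric]
  refine tsum_congr fun n => ?_
  simp [Finsupp.prod_fintype]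

theorem eulerSum_le_two_pow [Finite ι] (w : ι → ℝ≥0∞) (hw : ∀ i, w i ≤ 2⁻¹) :
    eulerSum w ≤ 2 ^ Nat.card ι := by
  induction ι using Finite.induction_empty_option with
  | of_equiv e ih =>
    rw [← eulerSum_comp_equiv e, ← Nat.card_congr e]
    exact ih _ fun i => hw (e i)
  | h_empty => simp [eulerSum_eq_tsum_finsupp, Finsupp.prod]
  | @h_option ι' _ ih =>
    let e : ι' ⊕ Unit ≃ Option ι' := (Equiv.optionEquivSumPUnit ι').symm
    have hunit : eulerSum ((w ∘ e) ∘ Sum.inr) ≤ 2 := by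
      rw [eulerSum_of_unique, ← inv_inv (2 : ℝ≥0∞), ENNReal.inv_le_inv, ← ENNReal.one_sub_inv_two]
      exact tsub_le_tsub_left (hw _) 1
    rw [← eulerSum_comp_equiv e, eulerSum_sum, Finite.card_option, pow_succ]
    exact mul_le_mul' (ih _ fun i => hw _) hunit

theorem eulerSum_le_two_pow_mul_eulerSum_compl {w : ι → ℝ≥0∞} {E : Set ι} (hE : E.Finite)
    (hw : ∀ i ∈ E, w i ≤ 2⁻¹) :
    eulerSum w ≤ 2 ^ E.ncard * eulerSum fun i : (Eᶜ : Set ι) => w i := by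
  classical
  have := hE.to_subtype
  rw [← eulerSum_comp_equiv (Equiv.Set.sumCompl E), eulerSum_sum]
  exact mul_le_mul' (eulerSum_le_two_pow _ fun i => hw i i.2) le_rfl

end EulerProduct

section IdealWeight

open Filter Topology ENNReal UniqueFactorizationMonoid

/-- The term `N(I)⁻ˢ` of the Dedekind zeta function, with values in `ℝ≥0∞` so that sums over ideals
always make sense. The zero ideal has weight `0` because `0 ^ (-s) = 0` in `ℝ` when `s ≠ 0`; for
`s = 0` it has weight `1`. -/
noncomputable def idealWeight (s : ℝ) : Ideal (𝓞 K) →* ℝ≥0∞ where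
  toFun I := ENNReal.ofReal ((Ideal.absNorm I : ℝ) ^ (-s))
  map_one' := by simp
  map_mul' I J := by
    rw [map_mul, Nat.cast_mul, Real.mul_rpow (Nat.cast_nonneg _) (Nat.cast_nonneg _),
      ENNReal.ofReal_mul (Real.rpow_nonneg (Nat.cast_nonneg _) _)]

theorem idealWeight_apply (s : ℝ) (I : Ideal (𝓞 K)) :
    idealWeight s I = ENNReal.ofReal ((Ideal.absNorm I : ℝ) ^ (-s)) := rfl

theorem idealWeight_bot {s : ℝ} (hs : s ≠ 0) : idealWeight s (⊥ : Ideal (𝓞 K)) = 0 := by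
  simp [idealWeight_apply, Real.zero_rpow (neg_ne_zero.2 hs)]

theorem idealWeight_le_of_prime {s : ℝ} (hs : 1 ≤ s) {p : Ideal (𝓞 K)} (hp : Prime p) :
    idealWeight s p ≤ 2⁻¹ := by
  have hne0 : Ideal.absNorm p ≠ 0 := Ideal.absNorm_eq_zero_iff.not.2 hp.ne_zero
  have hne1 : Ideal.absNorm p ≠ 1 :=
    Ideal.absNorm_eq_one_iff.not.2 (Ideal.isPrime_of_prime hp).ne_top
  have hnorm : (2 : ℝ) ≤ Ideal.absNorm p := by exact_mod_cast (by omega : 2 ≤ Ideal.absNorm p)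
  rw [idealWeight_apply, Real.rpow_neg (Nat.cast_nonneg _),
    ENNReal.ofReal_le_iff_le_toReal (by simp), ENNReal.toReal_inv]
  refine inv_anti₀ (by norm_num) ?_
  calc (2 : ℝ≥0∞).toReal = 2 := by simp
    _ ≤ Ideal.absNorm p := hnorm
    _ ≤ (Ideal.absNorm p : ℝ) ^ s := Real.self_le_rpow_of_one_le (by linarith) hs

theorem tsum_idealWeight_le_eulerSum {s : ℝ} (hs : s ≠ 0) :
    ∑' I : Ideal (𝓞 K), idealWeight s I ≤
      eulerSum fun p : {p : Ideal (𝓞 K) // Prime p} => idealWeight s p.1 := by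
  have hfactor : ∀ I : Ideal (𝓞 K), I ≠ ⊥ →
      ∃ m : Multiset {p : Ideal (𝓞 K) // Prime p}, (m.map Subtype.val).prod = I := by
    intro I hI
    refine ⟨(normalizedFactors I).attach.map fun p => ⟨p.1, prime_of_normalized_factor p.1 p.2⟩, ?_⟩
    rw [Multiset.map_map]
    simpa using prod_normalizedFactors_eq hI
  choose! m hm using hfactor
  rw [← tsum_subtype_eq_of_support_subset (s := {I | I ≠ ⊥})
    fun I hI h => hI (h ▸ idealWeight_bot hs)]
  have hinj : Function.Injective fun I : {I : Ideal (𝓞 K) | I ≠ ⊥} => m I.1 := fun I J h =>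
    Subtype.ext ((hm I.1 I.2).symm.trans (by rw [show m I.1 = m J.1 from h, hm J.1 J.2]))
  refine le_trans (le_of_eq (tsum_congr fun I => ?_))
    (ENNReal.tsum_comp_le_tsum_of_injective hinj _)
  conv_lhs => rw [← hm I.1 I.2, map_multiset_prod, Multiset.map_map]
  rfl

theorem eulerSum_le_tsum_idealWeight (s : ℝ) {ι : Type*} {P : ι → Ideal (𝓞 K)}
    (hP : ∀ i, Prime (P i)) (hinj : Function.Injective P) :
    eulerSum (fun i => idealWeight s (P i)) ≤ ∑' I : Ideal (𝓞 K), idealWeight s I := by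
  have hfactors : ∀ m : Multiset ι, normalizedFactors (m.map P).prod = m.map P := fun m =>
    normalizedFactors_prod_of_prime fun p hp => by
      obtain ⟨i, -, rfl⟩ := Multiset.mem_map.1 hp
      exact hP i
  have hprod : Function.Injective fun m : Multiset ι => (m.map P).prod := fun m m' h =>
    Multiset.map_injective hinj (by
      rw [← hfactors m, ← hfactors m', show (m.map P).prod = _ from h])
  refine le_trans (le_of_eq (tsum_congr fun m => ?_))
    (ENNReal.tsum_comp_le_tsum_of_injective hprod _)
  rw [map_multiset_prod, Multiset.map_map]
  rfl

theorem tsum_idealWeight_eq_tsum_nat (s : ℝ) :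
    ∑' I : Ideal (𝓞 K), idealWeight s I = ∑' n : ℕ, ENNReal.ofReal
      (Nat.card {I : Ideal (𝓞 K) // Ideal.absNorm I = n} * (n : ℝ) ^ (-s)) := by
  rw [← (Equiv.sigmaFiberEquiv (Ideal.absNorm (S := 𝓞 K))).tsum_eq, ENNReal.tsum_sigma']
  refine tsum_congr fun n => ?_
  have : Finite {I : Ideal (𝓞 K) // Ideal.absNorm I = n} := Ideal.finite_setOfPred_absNorm_eq n
  have hweight (I : {I : Ideal (𝓞 K) // Ideal.absNorm I = n}) :
      idealWeight s (Equiv.sigmaFiberEquiv (Ideal.absNorm (S := 𝓞 K)) ⟨n, I⟩) =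
        ENNReal.ofReal ((n : ℝ) ^ (-s)) := by
    change ENNReal.ofReal ((Ideal.absNorm I.1 : ℝ) ^ (-s)) = _
    rw [I.2]
  rw [tsum_congr hweight, ENNReal.tsum_const, ENat.card_eq_coe_natCard,
    ENNReal.ofReal_mul (Nat.cast_nonneg _), ENNReal.ofReal_natCast]
  rfl

theorem tendsto_sub_one_mul_tsum_idealWeight :
    Tendsto (fun s : ℝ => ENNReal.ofReal (s - 1) * ∑' I : Ideal (𝓞 K), idealWeight s I) (𝓝[>] 1)
      (𝓝 (ENNReal.ofReal (dedekindZeta_residue K))) := by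
  let a (s : ℝ) (n : ℕ) : ℝ :=
    Nat.card {I : Ideal (𝓞 K) // Ideal.absNorm I = n} * (n : ℝ) ^ (-s)
  have ha (s : ℝ) (n : ℕ) : 0 ≤ a s n := by positivity
  have hzeta (s : ℝ) (hs : s ≠ 0) : dedekindZeta K s = (∑' n, a s n : ℝ) := by
    rw [dedekindZeta, LSeries, Complex.ofReal_tsum]
    refine tsum_congr fun n => ?_
    rcases eq_or_ne n 0 with rfl | hn
    · simp [a, Real.zero_rpow (neg_ne_zero.2 hs)]
    · rw [LSeries.term_of_ne_zero hn, Complex.ofReal_mul, Real.rpow_neg (Nat.cast_nonneg _),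
        Complex.ofReal_inv, Complex.ofReal_cpow (Nat.cast_nonneg _), div_eq_mul_inv]
      simp
  have hlim : Tendsto (fun s : ℝ => (s - 1) * ∑' n, a s n) (𝓝[>] 1)
      (𝓝 (dedekindZeta_residue K)) := by
    rw [← Filter.tendsto_ofReal_iff]
    refine (tendsto_sub_one_mul_dedekindZeta_nhdsGT K).congr' ?_
    filter_upwards [self_mem_nhdsWithin] with s hs
    rw [hzeta s (zero_lt_one.trans hs).ne']
    push_cast
    rfl
  refine (ENNReal.tendsto_ofReal hlim).congr' ?_
  filter_upwards [hlim.eventually_ne (dedekindZeta_residue_pos K).ne', self_mem_nhdsWithin]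
    with s hne hs
  have hsum : Summable (a s) := by
    by_contra h
    exact hne (by rw [tsum_eq_zero_of_not_summable h, mul_zero])
  rw [ENNReal.ofReal_mul (sub_pos.2 hs).le, ENNReal.ofReal_tsum_of_nonneg (ha s) hsum,
    tsum_idealWeight_eq_tsum_nat]

end IdealWeight

section Splitting

open Filter Topology ENNReal

variable {L : Type*} [Field L] [NumberField L] [Algebra K L]

variable (L) in
/-- The primes of `L` above `p` of residue degree one, in the form in which they enter the
comparison of zeta functions: their absolute norm is that of `p`. -/
def degreeOnePrimesOver (p : Ideal (𝓞 K)) : Set (Ideal (𝓞 L)) :=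
  {P | Prime P ∧ P.LiesOver p ∧ Ideal.absNorm P = Ideal.absNorm p}

theorem eulerSum_sq_le_tsum_idealWeight {ι : Type*} {p : ι → Ideal (𝓞 K)}
    (hp : Function.Injective p) (hsplit : ∀ i, (degreeOnePrimesOver L (p i)).Nontrivial) (s : ℝ) :
    eulerSum (fun i => idealWeight s (p i)) ^ 2 ≤ ∑' I : Ideal (𝓞 L), idealWeight s I := by
  choose P hP Q hQ hne using hsplit
  have hover {i j : ι} {I : Ideal (𝓞 L)} (hi : I ∈ degreeOnePrimesOver L (p i))
      (hj : I ∈ degreeOnePrimesOver L (p j)) : i = j :=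
    hp (hi.2.1.over.trans hj.2.1.over.symm)
  have hinj : Function.Injective (Sum.elim P Q) := by
    refine Function.Injective.sumElim (fun i j h => hover (h ▸ hP i) (hP j))
      (fun i j h => hover (h ▸ hQ i) (hQ j)) fun i j h => ?_
    obtain rfl : i = j := hover (h ▸ hP i) (hQ j)
    exact hne i h
  have hprime : ∀ i, Prime (Sum.elim P Q i) := Sum.rec (fun i => (hP i).1) fun i => (hQ i).1
  refine le_trans (le_of_eq ?_) (eulerSum_le_tsum_idealWeight s hprime hinj)
  rw [eulerSum_sum, sq]
  congr 1 <;> refine congrArg eulerSum (funext fun i => ?_)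
  · simp [idealWeight_apply, (hP i).2.2]
  · simp [idealWeight_apply, (hQ i).2.2]

theorem tsum_idealWeight_sq_le {E : Set {p : Ideal (𝓞 K) // Prime p}} (hE : E.Finite)
    (hsplit : ∀ p ∉ E, (degreeOnePrimesOver L p.1).Nontrivial) {s : ℝ} (hs : 1 ≤ s) :
    (∑' I : Ideal (𝓞 K), idealWeight s I) ^ 2 ≤
      (2 ^ E.ncard) ^ 2 * ∑' I : Ideal (𝓞 L), idealWeight s I := by
  let w (p : {p : Ideal (𝓞 K) // Prime p}) : ℝ≥0∞ := idealWeight s p.1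
  have hinj : Function.Injective fun p : (Eᶜ : Set {p : Ideal (𝓞 K) // Prime p}) => p.1.1 :=
    Subtype.val_injective.comp Subtype.val_injective
  calc (∑' I : Ideal (𝓞 K), idealWeight s I) ^ 2
      ≤ eulerSum w ^ 2 :=
        pow_le_pow_left' (tsum_idealWeight_le_eulerSum (zero_lt_one.trans_le hs).ne') 2
    _ ≤ (2 ^ E.ncard * eulerSum fun p : (Eᶜ : Set _) => w p) ^ 2 :=
        pow_le_pow_left' (eulerSum_le_two_pow_mul_eulerSum_compl hE
          fun p _ => idealWeight_le_of_prime hs p.2) 2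
    _ = (2 ^ E.ncard) ^ 2 * (eulerSum fun p : (Eᶜ : Set _) => w p) ^ 2 := mul_pow _ _ _
    _ ≤ (2 ^ E.ncard) ^ 2 * ∑' I : Ideal (𝓞 L), idealWeight s I :=
        mul_le_mul' le_rfl (eulerSum_sq_le_tsum_idealWeight hinj (fun p => hsplit p.1 p.2) s)

/-- Otherwise `ζ_K(s) ^ 2 = O(ζ_L(s))` as `s → 1⁺`, although both functions have a simple pole. -/
theorem exists_prime_degreeOnePrimesOver_subsingleton (L : Type*) [Field L] [NumberField L]
    [Algebra K L] {E : Set {p : Ideal (𝓞 K) // Prime p}} (hE : E.Finite) :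
    ∃ p ∉ E, (degreeOnePrimesOver L p.1).Subsingleton := by
  by_contra! hsplit
  have hsq := ENNReal.Tendsto.pow (n := 2) (tendsto_sub_one_mul_tsum_idealWeight (K := K))
  have hbound : Tendsto (fun s : ℝ => (2 ^ E.ncard) ^ 2 * (ENNReal.ofReal (s - 1) *
      (ENNReal.ofReal (s - 1) * ∑' I : Ideal (𝓞 L), idealWeight s I))) (𝓝[>] 1) (𝓝 0) := by
    have hzero : Tendsto (fun s : ℝ => ENNReal.ofReal (s - 1)) (𝓝[>] 1) (𝓝 0) := by
      have : Continuous fun s : ℝ => ENNReal.ofReal (s - 1) :=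
        ENNReal.continuous_ofReal.comp (by fun_prop)
      simpa using (this.tendsto 1).mono_left nhdsWithin_le_nhds
    have hmul := ENNReal.Tendsto.mul hzero (.inr ENNReal.ofReal_ne_top)
      (tendsto_sub_one_mul_tsum_idealWeight (K := L)) (.inr ENNReal.zero_ne_top)
    have := ENNReal.Tendsto.const_mul hmul (a := (2 ^ E.ncard) ^ 2) (.inr (by simp))
    simpa only [zero_mul, mul_zero] using this
  have hle := le_of_tendsto_of_tendsto hsq hbound <| by
    filter_upwards [self_mem_nhdsWithin] with s hs
    calc (ENNReal.ofReal (s - 1) * ∑' I : Ideal (𝓞 K), idealWeight s I) ^ 2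
        ≤ ENNReal.ofReal (s - 1) ^ 2 *
            ((2 ^ E.ncard) ^ 2 * ∑' I : Ideal (𝓞 L), idealWeight s I) := by
          rw [mul_pow]
          exact mul_le_mul' le_rfl (tsum_idealWeight_sq_le hE hsplit (le_of_lt hs))
      _ = (2 ^ E.ncard) ^ 2 * (ENNReal.ofReal (s - 1) *
            (ENNReal.ofReal (s - 1) * ∑' I : Ideal (𝓞 L), idealWeight s I)) := by ring
  exact hle.not_gt (ENNReal.pow_pos (ENNReal.ofReal_pos.2 (dedekindZeta_residue_pos K)) 2)

theorem comap_ne_of_map_eq_neg {A B : Type*} [CommRing A] [CommRing B] [Algebra A B] {p : Ideal A}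
    [p.IsPrime] {P : Ideal B} [P.IsPrime] [P.LiesOver p] {α t : A} {θ : B}
    (hθ : θ ^ 2 = algebraMap A B α) {τ : B →ₐ[A] B} (hτ : τ θ = -θ) (h2 : 2 ∉ p) (ht : t ∉ p)
    (hαt : α - t ^ 2 ∈ p) : P.comap τ ≠ P := by
  intro hfix
  have hneg {x y : B} (hx : x ∈ P) (hy : τ x = y) : y ∈ P := by
    rwa [← hy, ← Ideal.mem_comap, hfix]
  have hmul : (algebraMap A B t - θ) * (algebraMap A B t + θ) ∈ P := by
    have hmem := P.neg_mem ((Ideal.mem_of_liesOver P p _).1 hαt)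
    convert hmem using 1
    rw [map_sub, map_pow, ← hθ]
    ring
  have hsum : (algebraMap A B t - θ) + (algebraMap A B t + θ) ∈ P := by
    rcases Ideal.IsPrime.mem_or_mem ‹_› hmul with h | h
    · exact P.add_mem h (hneg h (by simp [hτ]))
    · exact P.add_mem (hneg h (by simp [hτ, sub_eq_add_neg])) h
  have h2t : 2 * t ∈ p := by
    rw [Ideal.mem_of_liesOver P p]
    convert hsum using 1
    rw [map_mul, map_ofNat]
    ring
  exact (Ideal.IsPrime.mem_or_mem ‹_› h2t).elim h2 ht

theorem mem_degreeOnePrimesOver_of_nontrivial [Algebra.IsQuadraticExtension K L]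
    {p : Ideal (𝓞 K)} (hp : Prime p) (hover : (p.primesOver (𝓞 L)).Nontrivial)
    {P : Ideal (𝓞 L)} (hP : P ∈ p.primesOver (𝓞 L)) : P ∈ degreeOnePrimesOver L p := by
  have := Ideal.isPrime_of_prime hp
  have := hP.1
  have := hP.2
  have : p.IsMaximal := Ring.DimensionLEOne.maximalOfPrime hp.ne_zero ‹_›
  have : P.IsMaximal := Ideal.IsMaximal.of_liesOver_isMaximal P p
  have hdeg : P.inertiaDeg (𝓞 K) = 1 := by
    have hone := (Set.one_lt_ncard_iff_nontrivial_and_finite.2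
      ⟨hover, IsDedekindDomain.primesOver_finite p (𝓞 L)⟩)
    have hcount := Ideal.ncard_primesOver_mul_ramificationIdxIn_mul_inertiaDegIn p (𝓞 L) Gal(L/K)
    rw [IsGalois.card_aut_eq_finrank, Algebra.IsQuadraticExtension.finrank_eq_two] at hcount
    have htwo : (p.primesOver (𝓞 L)).ncard = 2 :=
      le_antisymm (Nat.le_of_dvd two_pos ⟨_, hcount.symm⟩) hone
    rw [htwo, Nat.mul_eq_left two_ne_zero] at hcount
    rw [← Ideal.inertiaDegIn_eq_inertiaDeg p P Gal(L/K)]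
    exact Nat.eq_one_of_mul_eq_one_left hcount
  refine ⟨Ideal.prime_of_isPrime (Ideal.ne_bot_of_liesOver_of_ne_bot hp.ne_zero P) hP.1, hP.2, ?_⟩
  rw [Ideal.absNorm_eq_pow_inertiaDeg'_of_liesOver P p ‹_› hp.ne_zero,
    Ideal.inertiaDeg'_eq_inertiaDeg, hdeg, pow_one]

theorem degreeOnePrimesOver_nontrivial [Algebra.IsQuadraticExtension K L] {α : (𝓞 K)ˣ} {θ : 𝓞 L}
    (hθ : θ ^ 2 = algebraMap (𝓞 K) (𝓞 L) α) {τ : 𝓞 L →ₐ[𝓞 K] 𝓞 L} (hτ : τ θ = -θ)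
    {p : Ideal (𝓞 K)} (hp : Prime p) (h2 : 2 ∉ p) (hα : IsSquare (Ideal.Quotient.mk p (α : 𝓞 K))) :
    (degreeOnePrimesOver L p).Nontrivial := by
  have := Ideal.isPrime_of_prime hp
  have : p.IsMaximal := Ring.DimensionLEOne.maximalOfPrime hp.ne_zero ‹_›
  obtain ⟨y, hy⟩ := hα
  obtain ⟨t, rfl⟩ := Ideal.Quotient.mk_surjective y
  have hαt : (α : 𝓞 K) - t ^ 2 ∈ p := by
    rw [← Ideal.Quotient.mk_eq_mk_iff_sub_mem, hy, sq, map_mul]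
  have ht : t ∉ p := fun ht => Ideal.IsPrime.ne_top ‹_› <| Ideal.eq_top_of_isUnit_mem p
    ((p.sub_mem_iff_left (p.pow_mem_of_mem ht 2 two_pos)).1 hαt) α.isUnit
  obtain ⟨P, hPmax, hPp⟩ := Ideal.exists_maximal_ideal_liesOver_of_isIntegral (S := 𝓞 L) p
  have := hPmax.isPrime
  have hP : P ∈ p.primesOver (𝓞 L) := ⟨this, hPp⟩
  have hτP : P.comap τ ∈ p.primesOver (𝓞 L) :=
    ⟨Ideal.comap_isPrime _ _, ⟨by rw [hPp.over]; ext x; simp [Ideal.under]⟩⟩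
  have hne : P.comap τ ≠ P := comap_ne_of_map_eq_neg hθ hτ h2 ht hαt
  have hover : (p.primesOver (𝓞 L)).Nontrivial := ⟨_, hτP, _, hP, hne⟩
  exact ⟨_, mem_degreeOnePrimesOver_of_nontrivial hp hover hτP,
    _, mem_degreeOnePrimesOver_of_nontrivial hp hover hP, hne⟩

theorem finite_setOf_prime_mem {x : 𝓞 K} (hx : x ≠ 0) :
    {p : {p : Ideal (𝓞 K) // Prime p} | x ∈ p.1}.Finite := by
  have hspan : Ideal.span {x} ≠ 0 := by simpa using hx
  have := UniqueFactorizationMonoid.fintypeSubtypeDvd _ hspan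
  have hdvd : {I : Ideal (𝓞 K) | I ∣ Ideal.span {x}}.Finite :=
    Set.finite_coe_iff.1 (Finite.of_fintype {I // I ∣ Ideal.span {x}})
  exact (hdvd.preimage Subtype.val_injective.injOn).subset fun p hp =>
    Ideal.dvd_span_singleton.2 hp

theorem isSquare_unit_of_isSquare_algebraMap {R F : Type*} [CommRing R] [IsDomain R]
    [IsIntegrallyClosed R] [Field F] [Algebra R F] [IsFractionRing R F] {u : Rˣ}
    (hu : IsSquare (algebraMap R F u)) : IsSquare u := by
  obtain ⟨r, hr⟩ := hu
  obtain ⟨y, rfl⟩ := IsIntegrallyClosed.exists_algebraMap_eq_of_isIntegral_pow (R := R) two_pos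
    (x := r) (by rw [sq, ← hr]; exact isIntegral_algebraMap)
  have hy : (u : R) = y * y := IsFractionRing.injective R F (by rw [hr, map_mul])
  have hunit : IsUnit y := isUnit_of_mul_isUnit_left (hy ▸ u.isUnit)
  exact ⟨hunit.unit, Units.ext hy⟩

/-- The conjugation of a quadratic algebra as an algebra homomorphism; Mathlib has it only as the
ring homomorphism `starRingEnd`. -/
def quadraticConj {R : Type*} [CommRing R] (a b : R) :
    QuadraticAlgebra R a b →ₐ[R] QuadraticAlgebra R a b where
  toRingHom := starRingEnd _
  commutes' r := by
    change star _ = _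
    ext <;> simp

theorem quadraticConj_omega {R : Type*} [CommRing R] (a : R) :
    quadraticConj a 0 QuadraticAlgebra.omega = -QuadraticAlgebra.omega := by
  change star _ = _
  ext <;> simp

theorem omega_sq_eq_algebraMap {R : Type*} [CommRing R] (a : R) :
    (QuadraticAlgebra.omega : QuadraticAlgebra R a 0) ^ 2 = algebraMap R _ a := by
  rw [sq, QuadraticAlgebra.omega_mul_omega_eq_add, zero_smul, add_zero,
    Algebra.algebraMap_eq_smul_one]

theorem isSquare_of_residueSymbol_eq_one {α : (𝓞 K)ˣ}
    (hα : ∀ p : Ideal (𝓞 K), Prime p → 2 ∉ p → residueSymbol (α : 𝓞 K) p = 1) : IsSquare α := by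
  by_contra hns
  let a : K := algebraMap (𝓞 K) K α
  have : Fact (∀ r : K, r ^ 2 ≠ a + 0 * r) := ⟨fun r hr =>
    hns (isSquare_unit_of_isSquare_algebraMap ⟨r, by rw [← sq, hr, zero_mul, add_zero]⟩)⟩
  let L := QuadraticAlgebra K a 0
  have : Algebra.IsQuadraticExtension K L := ⟨QuadraticAlgebra.finrank_eq_two a 0⟩
  have : NumberField L := NumberField.of_module_finite K L
  have hω : QuadraticAlgebra.omega ^ 2 = algebraMap K L a := omega_sq_eq_algebraMap a
  let θ : 𝓞 L := ⟨QuadraticAlgebra.omega, .of_pow two_pos (hω ▸ α.val.2.algebraMap)⟩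
  have hθ : θ ^ 2 = algebraMap (𝓞 K) (𝓞 L) α := RingOfIntegers.ext hω
  have hτ : RingOfIntegers.mapAlgHom (quadraticConj a 0) θ = -θ :=
    RingOfIntegers.ext (quadraticConj_omega a)
  obtain ⟨p, h2, hp⟩ := exists_prime_degreeOnePrimesOver_subsingleton L
    (finite_setOf_prime_mem (two_ne_zero (α := 𝓞 K)))
  exact Set.not_subsingleton_iff.2 (degreeOnePrimesOver_nontrivial hθ hτ p.2 h2
    (residueSymbol_eq_one_iff.1 (hα p.1 p.2 h2))) hp

end Splitting

section SquareClasses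

/-- The subgroup `G²` of squares of a commutative group, in the form in which `E_K²` enters the
statement of the theorem. -/
abbrev squares (G : Type*) [CommGroup G] : Subgroup G := (powMonoidHom 2 : G →* G).range

theorem index_squares_eq_card_sq_eq_one (G : Type*) [CommGroup G] [Finite G] :
    (squares G).index = Nat.card {c : G // c ^ 2 = 1} :=
  Subgroup.index_range

theorem map_squares_of_surjective {G H : Type*} [CommGroup G] [CommGroup H] {f : G →* H}
    (hf : Function.Surjective f) : (squares G).map f = squares H := by
  have hcomm : f.comp (powMonoidHom 2) = (powMonoidHom 2).comp f := by ext; simp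
  rw [← MonoidHom.range_comp, hcomm, MonoidHom.range_comp, MonoidHom.range_eq_top.2 hf,
    ← MonoidHom.range_eq_map]

theorem squares_subgroupOf_torsion (G : Type*) [CommGroup G] :
    (squares G).subgroupOf (CommGroup.torsion G) = squares (CommGroup.torsion G) := by
  ext ⟨t, ht⟩
  constructor
  · rintro ⟨g, hg⟩
    have hg' : IsOfFinOrder (g ^ 2) := (congrArg IsOfFinOrder hg).mpr ht
    exact ⟨⟨g, (isOfFinOrder_pow.1 hg').resolve_right two_ne_zero⟩, Subtype.ext hg⟩
  · rintro ⟨⟨g, _⟩, hg⟩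
    exact ⟨g, congrArg Subtype.val hg⟩

theorem index_squares_sup (G : Type*) [CommGroup G] (N : Subgroup G) :
    (squares G ⊔ N).index = (squares (G ⧸ N)).index := by
  have hsurj := QuotientGroup.mk'_surjective N
  rw [← Subgroup.index_comap_of_surjective _ hsurj, ← map_squares_of_surjective hsurj,
    Subgroup.comap_map_eq, QuotientGroup.ker_mk']

theorem index_squares_units (K : Type*) [Field K] [NumberField K] :
    (squares (𝓞 K)ˣ).index = 2 ^ (Units.rank K + 1) := by
  have htorsion : (squares (𝓞 K)ˣ).relIndex (Units.torsion K) = 2 := by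
    rw [Subgroup.relIndex, Units.torsion, squares_subgroupOf_torsion]
    exact (IsCyclic.index_powMonoidHom_range (Units.torsion K) 2).trans
      (Nat.gcd_eq_right (Units.even_torsionOrder K).two_dvd)
  have hfree : (squares ((𝓞 K)ˣ ⧸ Units.torsion K)).index = 2 ^ Units.rank K :=
    (AddSubgroup.index_range_nsmul (Additive ((𝓞 K)ˣ ⧸ Units.torsion K)) 2).trans
      (by rw [Units.finrank_modTorsion])
  rw [← Subgroup.relIndex_mul_index (le_sup_left (b := Units.torsion K)),
    Subgroup.relIndex_sup_left, htorsion, index_squares_sup, hfree, pow_succ']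

end SquareClasses

section CharacterCounting

theorem card_monoidHom_int_units_le (A : Type*) [CommGroup A] [Finite A] :
    Nat.card (A →* ℤˣ) ≤ Nat.card A := by
  obtain ⟨e⟩ := CommGroup.monoidHom_mulEquiv_of_hasEnoughRootsOfUnity A ℂ
  let ι : ℤˣ →* ℂˣ := Units.map (Int.castRingHom ℂ : ℤ →* ℂ)
  have hι : Function.Injective ι := Units.map_injective Int.cast_injective
  refine Nat.card_le_card_of_injective (fun χ => e (ι.comp χ)) fun χ ψ h => ?_
  exact (MonoidHom.cancel_left hι).1 (e.injective h)

variable {P M U : Type*} [CommGroup P] [CommMonoid M] [CommGroup U] [Finite U]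

theorem index_ker_le_card (l : P →* M →* ℤˣ) {φ : M →* U} (hφ : Function.Surjective φ)
    (hl : ∀ a m, φ m = 1 → l a m = 1) : l.ker.index ≤ Nat.card U := by
  have hfactor (a : P) : Con.ker φ ≤ Con.ker (l a) := by
    intro m m' (h : φ m = φ m')
    obtain ⟨n, hn⟩ := hφ (φ m)⁻¹
    have h₁ : l a m * l a n = 1 := by
      rw [← map_mul]
      exact hl a _ (by rw [map_mul, hn, mul_inv_cancel])
    have h₂ : l a m' * l a n = 1 := by
      rw [← map_mul]
      exact hl a _ (by rw [map_mul, hn, ← h, mul_inv_cancel])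
    exact mul_right_cancel (h₁.trans h₂.symm)
  have hsubset : (l.range : Set (M →* ℤˣ)) ⊆ Set.range fun χ : U →* ℤˣ => χ.comp φ := by
    rintro _ ⟨a, rfl⟩
    refine ⟨((Con.ker φ).lift (l a) (hfactor a)).comp
      (Con.quotientKerEquivOfSurjective φ hφ).symm.toMonoidHom, ?_⟩
    ext1 m
    have hm : (Con.quotientKerEquivOfSurjective φ hφ).symm (φ m) = (m : (Con.ker φ).Quotient) :=
      (MulEquiv.symm_apply_eq _).2 rfl
    exact congrArg ((Con.ker φ).lift (l a) (hfactor a)) hm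
  calc l.ker.index = Nat.card l.range := Subgroup.index_ker l
    _ ≤ Nat.card (Set.range fun χ : U →* ℤˣ => χ.comp φ) :=
      Nat.card_mono (Set.finite_range _) hsubset
    _ ≤ Nat.card (U →* ℤˣ) := Finite.card_range_le _
    _ ≤ Nat.card U := card_monoidHom_int_units_le U

theorem index_ker_le_index_squares_sup (l : P →* M →* ℤˣ) {φ : M →* U}
    (hφ : Function.Surjective φ) (N : Subgroup U) (hl : ∀ a m, φ m ∈ N → l a m = 1) :
    l.ker.index ≤ (squares U ⊔ N).index := by
  let mk := QuotientGroup.mk' (squares U ⊔ N)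
  refine index_ker_le_card l (φ := mk.comp φ)
    ((QuotientGroup.mk'_surjective _).comp hφ) fun a m hm => ?_
  obtain ⟨_, ⟨u, rfl⟩, v, hv, huv⟩ :=
    Subgroup.mem_sup.1 ((QuotientGroup.eq_one_iff (φ m)).1 hm)
  obtain ⟨n, rfl⟩ := hφ u
  obtain ⟨n', hn'⟩ := hφ (φ n)⁻¹
  have h : l a (m * n' ^ 2) = 1 := hl a _ (by
    rw [map_mul, map_pow, hn', ← huv, powMonoidHom_apply, inv_pow, mul_comm, inv_mul_cancel_left]
    exact hv)
  rwa [map_mul, map_pow, Int.units_sq, mul_one] at h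

theorem index_ker_le_card_sq_eq_one (l : P →* M →* ℤˣ) {φ : M →* U}
    (hφ : Function.Surjective φ) (hl : ∀ a m, φ m = 1 → l a m = 1) :
    l.ker.index ≤ Nat.card {c : U // c ^ 2 = 1} := by
  rw [← index_squares_eq_card_sq_eq_one, ← sup_bot_eq (squares U)]
  exact index_ker_le_index_squares_sup l hφ ⊥ fun a m hm => hl a m (Subgroup.mem_bot.1 hm)

theorem index_comap_squares_mul_index_ker_le (l : P →* M →* ℤˣ) {φ : M →* U}
    (hφ : Function.Surjective φ) (π : P →* U) (hl : ∀ a b m, φ m = π b → l a m = 1) :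
    ((squares U).comap π).index * l.ker.index ≤ Nat.card {c : U // c ^ 2 = 1} := by
  have hker : l.ker.index ≤ (squares U ⊔ π.range).index :=
    index_ker_le_index_squares_sup l hφ π.range fun a m ⟨b, hb⟩ => hl a b m hb.symm
  calc ((squares U).comap π).index * l.ker.index
      ≤ (squares U).relIndex (squares U ⊔ π.range) * (squares U ⊔ π.range).index := by
        rw [Subgroup.index_comap, Subgroup.relIndex_sup_left]
        gcongr
    _ = Nat.card {c : U // c ^ 2 = 1} := by
        rw [Subgroup.relIndex_mul_index le_sup_left, index_squares_eq_card_sq_eq_one]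

end CharacterCounting

section UnitsModFour

theorem two_dvd_sub_one_of_four_dvd_sq_sub_one {R : Type*} [CommRing R] [IsDomain R]
    [IsIntegrallyClosed R] (h2 : (2 : R) ≠ 0) {x : R} (hx : 4 ∣ x ^ 2 - 1) : 2 ∣ x - 1 := by
  obtain ⟨m, hm⟩ := hx
  have h2' : (2 : FractionRing R) ≠ 0 := by
    rwa [← map_ofNat (algebraMap R (FractionRing R)) 2,
      map_ne_zero_iff _ (IsFractionRing.injective R (FractionRing R))]
  have hm' : algebraMap R (FractionRing R) x ^ 2 - 1 = 4 * algebraMap R (FractionRing R) m := by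
    rw [← map_ofNat (algebraMap R (FractionRing R)) 4, ← map_mul, ← hm, map_sub, map_pow, map_one]
  have hint : IsIntegral R ((algebraMap R (FractionRing R) x - 1) / 2) := by
    refine ⟨.X ^ 2 + (.X - .C m), Polynomial.monic_X_pow_add
      ((Polynomial.degree_X_sub_C_le m).trans_lt (by norm_num)), ?_⟩
    simp only [Polynomial.eval₂_add, Polynomial.eval₂_sub, Polynomial.eval₂_pow,
      Polynomial.eval₂_X, Polynomial.eval₂_C]
    field_simp
    linear_combination hm'
  obtain ⟨z, hz⟩ := IsIntegrallyClosed.isIntegral_iff.1 hint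
  refine ⟨z, IsFractionRing.injective R (FractionRing R) ?_⟩
  rw [map_mul, hz, map_ofNat, map_sub, map_one, mul_div_cancel₀ _ h2']

theorem card_quotient_span_two (K : Type*) [Field K] [NumberField K] :
    Nat.card (𝓞 K ⧸ Ideal.span {(2 : 𝓞 K)}) = 2 ^ Module.finrank ℚ K := by
  rw [← Submodule.cardQuot_apply, ← Ideal.absNorm_apply, Ideal.absNorm_span_singleton,
    ← map_ofNat (algebraMap ℤ (𝓞 K)) 2, Algebra.norm_algebraMap, RingOfIntegers.rank,
    Int.natAbs_pow]
  rfl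

theorem card_units_quotient_span_four_sq_eq_one_le (K : Type*) [Field K] [NumberField K] :
    Nat.card {u : (𝓞 K ⧸ Ideal.span {(4 : 𝓞 K)})ˣ // u ^ 2 = 1} ≤ 2 ^ Module.finrank ℚ K := by
  have hlift (u : {u : (𝓞 K ⧸ Ideal.span {(4 : 𝓞 K)})ˣ // u ^ 2 = 1}) :
      ∃ z : 𝓞 K, Ideal.Quotient.mk (Ideal.span {4}) (1 + 2 * z) = u.1 := by
    obtain ⟨u, hu⟩ := u
    obtain ⟨x, hx⟩ := Ideal.Quotient.mk_surjective (u : 𝓞 K ⧸ Ideal.span {(4 : 𝓞 K)})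
    have hsq : Ideal.Quotient.mk (Ideal.span {4}) (x ^ 2) = Ideal.Quotient.mk _ 1 := by
      rw [map_pow, hx, ← Units.val_pow_eq_pow_val, hu, map_one, Units.val_one]
    obtain ⟨z, hz⟩ := two_dvd_sub_one_of_four_dvd_sq_sub_one two_ne_zero
      (Ideal.mem_span_singleton.1 ((Ideal.Quotient.mk_eq_mk_iff_sub_mem _ _).1 hsq))
    exact ⟨z, by rw [← hz, add_sub_cancel, hx]⟩
  choose z hz using hlift
  rw [← card_quotient_span_two]
  refine Nat.card_le_card_of_injective (fun u => Ideal.Quotient.mk (Ideal.span {2}) (z u))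
    fun u v huv => Subtype.ext (Units.ext ?_)
  obtain ⟨m, hm⟩ := Ideal.mem_span_singleton.1 ((Ideal.Quotient.mk_eq_mk_iff_sub_mem _ _).1 huv)
  rw [← hz, ← hz, Ideal.Quotient.mk_eq_mk_iff_sub_mem, Ideal.mem_span_singleton]
  exact ⟨m, by linear_combination 2 * hm⟩

end UnitsModFour

section OddElements

variable (R : Type*) [CommRing R]

/-- The multiplicative monoid of elements of `R` prime to `2`. -/
def oddElements : Submonoid R where
  carrier := {x | IsCoprime x 2}
  one_mem' := isCoprime_one_left
  mul_mem' := IsCoprime.mul_left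

theorem isUnit_mk_span_four_iff {R : Type*} [CommRing R] {x : R} :
    IsUnit (Ideal.Quotient.mk (Ideal.span {4}) x) ↔ IsCoprime x 2 := by
  rw [isUnit_mk_span_singleton_iff, show (4 : R) = 2 ^ 2 by norm_num,
    IsCoprime.pow_right_iff two_pos]

/-- Reduction modulo `4` of the elements prime to `2`. -/
noncomputable def oddModFour : oddElements R →* (R ⧸ Ideal.span {(4 : R)})ˣ :=
  IsUnit.liftRight ((Ideal.Quotient.mk (Ideal.span {(4 : R)})).toMonoidHom.comp
    (oddElements R).subtype) fun x => isUnit_mk_span_four_iff.2 x.2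

theorem oddModFour_surjective : Function.Surjective (oddModFour R) := by
  intro u
  obtain ⟨x, hx⟩ := Ideal.Quotient.mk_surjective (u : R ⧸ Ideal.span {(4 : R)})
  exact ⟨⟨x, isUnit_mk_span_four_iff.1 (hx ▸ u.isUnit)⟩, Units.ext hx⟩

/-- Reduction modulo `4` of the units. -/
def unitsModFour : Rˣ →* (R ⧸ Ideal.span {(4 : R)})ˣ :=
  Units.map (Ideal.Quotient.mk (Ideal.span {(4 : R)})).toMonoidHom

end OddElements

section OddIdeals

variable (K) in
/-- The monoid of ideals prime to `2`. -/
def oddIdeals : Submonoid (Ideal (𝓞 K)) where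
  carrier := {I | IsCoprime I (Ideal.span {2})}
  one_mem' := isCoprime_one_left
  mul_mem' := IsCoprime.mul_left

theorem oddIdeals_le_nonZeroDivisors : oddIdeals K ≤ (Ideal (𝓞 K))⁰ := fun _ hI =>
  mem_nonZeroDivisors_of_ne_zero (ne_bot_of_isCoprime_two hI)

variable (K) in
/-- The class of an ideal prime to `2`. -/
noncomputable def oddIdealClass : oddIdeals K →* ClassGroup (𝓞 K) :=
  ClassGroup.mk0.comp (Submonoid.inclusion oddIdeals_le_nonZeroDivisors)

theorem oddIdealClass_surjective : Function.Surjective (oddIdealClass K) := by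
  intro c
  obtain ⟨I, rfl⟩ := ClassGroup.mk0_surjective c
  have h2 : Ideal.span {(2 : 𝓞 K)} ≠ ⊥ := by simp
  have h2' := FractionalIdeal.coeIdeal_ne_zero (K := K).2 h2
  obtain ⟨x, J, hJ, hJ2⟩ := exists_coeIdeal_eq_spanSingleton_mul_isCoprime h2
    (mul_ne_zero (inv_ne_zero h2')
      (FractionalIdeal.coeIdeal_ne_zero (K := K).2 (nonZeroDivisors.ne_zero I.2)))
  rw [mul_inv_cancel_left₀ h2'] at hJ
  refine ⟨⟨J, hJ2⟩, ((ClassGroup.mk0_eq_mk0_iff_exists_fraction_ring K).2 ⟨x, ?_, hJ.symm⟩).symm⟩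
  rintro rfl
  refine ne_bot_of_isCoprime_two hJ2 (FractionalIdeal.coeIdeal_eq_zero.1 (hJ.trans ?_))
  rw [FractionalIdeal.spanSingleton_zero, zero_mul]

variable (K) in
/-- The symbol `(α, I) ↦ idealSymbol α I` as a bimultiplicative pairing of the units of `K` with
the ideals prime to `2`. -/
noncomputable def oddIdealSymbol : (𝓞 K)ˣ →* oddIdeals K →* ℤˣ where
  toFun α :=
    { toFun I := idealSymbol α I
      map_one' := idealSymbol_one α
      map_mul' I J :=
        idealSymbol_mul α (ne_bot_of_isCoprime_two I.2) (ne_bot_of_isCoprime_two J.2) }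
  map_one' := MonoidHom.ext fun I => one_idealSymbol (I : Ideal (𝓞 K))
  map_mul' α β := MonoidHom.ext fun I => mul_idealSymbol α β (I : Ideal (𝓞 K))

variable (K) in
/-- The principal ideal generated by an integer prime to `2`. -/
def oddSpan : oddElements (𝓞 K) →* oddIdeals K where
  toFun x := ⟨Ideal.span {(x : 𝓞 K)}, (Ideal.isCoprime_span_singleton_iff _ _).2 x.2⟩
  map_one' := Subtype.ext (Ideal.span_singleton_one.trans Ideal.one_eq_top.symm)
  map_mul' _ _ := Subtype.ext (Ideal.span_singleton_mul_span_singleton _ _).symm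

theorem exists_oddSpan_eq {I : oddIdeals K} (hI : oddIdealClass K I = 1) :
    ∃ x, oddSpan K x = I := by
  obtain ⟨x, hx⟩ := ((ClassGroup.mk0_eq_one_iff (oddIdeals_le_nonZeroDivisors I.2)).1 hI).principal
  have hx' : (I : Ideal (𝓞 K)) = Ideal.span {x} := hx
  exact ⟨⟨x, (Ideal.isCoprime_span_singleton_iff _ _).1 (hx' ▸ I.2)⟩, Subtype.ext hx'.symm⟩

theorem ker_oddIdealSymbol : (oddIdealSymbol K).ker = squares (𝓞 K)ˣ := by
  ext α
  constructor
  · intro hα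
    obtain ⟨β, rfl⟩ := isSquare_of_residueSymbol_eq_one (α := α) fun p hp h2 => by
      have hmax := (Ideal.isPrime_of_prime hp).isMaximal hp.ne_zero
      have hodd : p ∈ oddIdeals K := Ideal.isCoprime_iff_sup_eq.2
        (hmax.1.2 _ (left_lt_sup.2 fun h => h2 (h (Ideal.mem_span_singleton_self 2))))
      rw [← idealSymbol_of_prime α hp]
      exact DFunLike.congr_fun hα ⟨p, hodd⟩
    exact ⟨β, pow_two β⟩
  · rintro ⟨β, rfl⟩
    ext I
    rw [powMonoidHom_apply, map_pow, MonoidHom.pow_apply, Int.units_sq, MonoidHom.one_apply]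

end OddIdeals

section TotallyPositiveUnits

variable (K) in
/-- The restriction of `oddIdealSymbol` to totally positive units and to principal ideals, each
given by a generator prime to `2`. -/
noncomputable def principalSymbol : totPosUnits K →* oddElements (𝓞 K) →* ℤˣ :=
  ((oddSpan K).compHom'.comp (oddIdealSymbol K)).comp (totPosUnits K).subtype

theorem principalSymbol_apply (α : totPosUnits K) (x : oddElements (𝓞 K)) :
    principalSymbol K α x = idealSymbol α (Ideal.span {(x : 𝓞 K)}) := rfl

variable (K) in
/-- The totally positive units that are squares modulo `4`. -/
noncomputable def primaryTotPosUnits : Subgroup (totPosUnits K) :=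
  (squares (𝓞 K ⧸ Ideal.span {(4 : 𝓞 K)})ˣ).comap
    ((unitsModFour (𝓞 K)).comp (totPosUnits K).subtype)

theorem principalSymbol_eq_one_of_modFour_eq (α β : totPosUnits K) (x : oddElements (𝓞 K))
    (h : oddModFour (𝓞 K) x = unitsModFour (𝓞 K) β) : principalSymbol K α x = 1 := by
  let β' : 𝓞 K := ((β : (𝓞 K)ˣ)⁻¹ : (𝓞 K)ˣ)
  have hone : Ideal.Quotient.mk (Ideal.span {4}) (x * β') = 1 := by
    have hval : Ideal.Quotient.mk (Ideal.span {4}) (x : 𝓞 K) =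
        Ideal.Quotient.mk _ ((β : (𝓞 K)ˣ) : 𝓞 K) :=
      congrArg Units.val h
    rw [map_mul, hval, ← map_mul, Units.mul_inv, map_one]
  rw [principalSymbol_apply, ← Ideal.span_singleton_mul_right_unit (Units.isUnit _) (a := β')]
  exact idealSymbol_span_of_isSquare_mk α.2 (isUnit_mk_span_four_iff.1 (hone ▸ isUnit_one))
    (hone ▸ IsSquare.one)

theorem primaryTotPosUnits_le_ker_principalSymbol :
    primaryTotPosUnits K ≤ (principalSymbol K).ker := by
  rintro α ⟨u, hu⟩
  ext1 x
  exact idealSymbol_span_of_isSquare_mk_unit α.2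
    ⟨u, (congrArg Units.val hu).symm.trans (pow_two (u : 𝓞 K ⧸ Ideal.span {(4 : 𝓞 K)}))⟩ x.2

theorem squares_subgroupOf_le_primaryTotPosUnits (K : Type*) [Field K] :
    (squares (𝓞 K)ˣ).subgroupOf (totPosUnits K) ≤ primaryTotPosUnits K := by
  rintro α ⟨β, hβ⟩
  exact ⟨unitsModFour (𝓞 K) β, (map_pow _ β 2).symm.trans (congrArg (unitsModFour (𝓞 K)) hβ)⟩

theorem index_primaryTotPosUnits_mul_index_ker_principalSymbol_le :
    (primaryTotPosUnits K).index * (principalSymbol K).ker.index ≤ 2 ^ Module.finrank ℚ K := by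
  have : Finite (𝓞 K ⧸ Ideal.span {(4 : 𝓞 K)}) :=
    Ring.HasFiniteQuotients.finiteQuotient (by simp)
  exact (index_comap_squares_mul_index_ker_le _ (oddModFour_surjective (𝓞 K)) _
    principalSymbol_eq_one_of_modFour_eq).trans (card_units_quotient_span_four_sq_eq_one_le K)

theorem relIndex_ker_principalSymbol_le :
    ((squares (𝓞 K)ˣ).subgroupOf (totPosUnits K)).relIndex (principalSymbol K).ker ≤
      Nat.card {c : ClassGroup (𝓞 K) // c ^ 2 = 1} := by
  let κ := (oddIdealSymbol K).comp
    ((totPosUnits K).subtype.comp (principalSymbol K).ker.subtype)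
  have hκ : κ.ker = ((squares (𝓞 K)ˣ).subgroupOf (totPosUnits K)).subgroupOf
      (principalSymbol K).ker := by
    rw [← ker_oddIdealSymbol]
    rfl
  rw [Subgroup.relIndex, ← hκ]
  refine index_ker_le_card_sq_eq_one κ oddIdealClass_surjective fun α I hI => ?_
  obtain ⟨x, rfl⟩ := exists_oddSpan_eq hI
  exact DFunLike.congr_fun α.2 x

theorem index_squares_totPosUnits_sq_le (K : Type*) [Field K] [NumberField K] :
    ((squares (𝓞 K)ˣ).subgroupOf (totPosUnits K)).index ^ 2 ≤
      2 ^ Module.finrank ℚ K * Nat.card {c : ClassGroup (𝓞 K) // c ^ 2 = 1} ^ 2 := by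
  set S := (squares (𝓞 K)ˣ).subgroupOf (totPosUnits K)
  set T := primaryTotPosUnits K
  set D := (principalSymbol K).ker
  have hST : S ≤ T := squares_subgroupOf_le_primaryTotPosUnits K
  have hTD : T ≤ D := primaryTotPosUnits_le_ker_principalSymbol
  have hfinite : (squares (𝓞 K)ˣ).FiniteIndex := ⟨by rw [index_squares_units]; positivity⟩
  have hSD : S.relIndex D ≤ Nat.card {c : ClassGroup (𝓞 K) // c ^ 2 = 1} :=
    relIndex_ker_principalSymbol_le
  have hSTD : S.relIndex T ≤ S.relIndex D :=
    Subgroup.relIndex_le_of_le_right hTD Subgroup.FiniteIndex.index_ne_zero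
  calc S.index ^ 2 = (S.relIndex T * T.index) * (S.relIndex D * D.index) := by
        rw [Subgroup.relIndex_mul_index hST, Subgroup.relIndex_mul_index (hST.trans hTD), sq]
    _ = (T.index * D.index) * (S.relIndex T * S.relIndex D) := by ring
    _ ≤ 2 ^ Module.finrank ℚ K * (Nat.card {c : ClassGroup (𝓞 K) // c ^ 2 = 1} *
          Nat.card {c : ClassGroup (𝓞 K) // c ^ 2 = 1}) := by
        gcongr
        · exact index_primaryTotPosUnits_mul_index_ker_principalSymbol_le
        · exact hSTD.trans hSD
    _ = _ := by rw [sq]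

end TotallyPositiveUnits

section UnitSignature

theorem card_ringHom_real (K : Type*) [Field K] [NumberField K] :
    Nat.card (K →+* ℝ) = InfinitePlace.nrRealPlaces K := by
  classical
  rw [← InfinitePlace.card_real_embeddings, ← Nat.card_eq_fintype_card]
  exact Nat.card_congr
    { toFun φ := ⟨Complex.ofRealHom.comp φ, ComplexEmbedding.isReal_iff.2 <| RingHom.ext fun x => by
        rw [ComplexEmbedding.conjugate_coe_eq]
        exact Complex.conj_ofReal _⟩
      invFun φ := φ.2.embedding
      left_inv φ := RingHom.ext fun x => Complex.ofReal_injective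
        (ComplexEmbedding.IsReal.coe_embedding_apply _ x)
      right_inv φ := Subtype.ext <| RingHom.ext fun x =>
        ComplexEmbedding.IsReal.coe_embedding_apply φ.2 x }

variable {F : Type*} [Field F]

theorem map_unit_ne_zero (φ : F →+* ℝ) (ε : (𝓞 F)ˣ) : φ (algebraMap (𝓞 F) F ε) ≠ 0 :=
  (map_ne_zero φ).2 (RingOfIntegers.coe_ne_zero_iff.2 ε.ne_zero)

theorem squares_le_totPosUnits : squares (𝓞 F)ˣ ≤ totPosUnits F := by
  rintro _ ⟨ε, rfl⟩ φ
  rw [powMonoidHom_apply, Units.val_pow_eq_pow_val, map_pow, map_pow]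
  exact sq_pos_of_ne_zero (map_unit_ne_zero φ ε)

theorem inv_mul_mem_totPosUnits_iff {ε η : (𝓞 F)ˣ} : ε⁻¹ * η ∈ totPosUnits F ↔
    sgnVec F (algebraMap (𝓞 F) F ε) = sgnVec F (algebraMap (𝓞 F) F η) := by
  rw [funext_iff]
  refine forall_congr' fun φ => ?_
  have hη : φ (algebraMap (𝓞 F) F η) =
      φ (algebraMap (𝓞 F) F ε) * φ (algebraMap (𝓞 F) F ((ε⁻¹ * η : (𝓞 F)ˣ) : 𝓞 F)) := by
    rw [← map_mul, ← map_mul, ← Units.val_mul, mul_inv_cancel_left]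
  have hite (p q : Prop) [Decidable p] [Decidable q] :
      ((if p then 0 else 1 : ZMod 2) = if q then 0 else 1) ↔ (p ↔ q) := by
    split_ifs <;> simp_all
  rw [sgnVec, sgnVec, hite, hη]
  rcases (map_unit_ne_zero φ ε).lt_or_gt with hε | hε
  · rw [← neg_mul_neg (φ _), mul_pos_iff_of_pos_left (neg_pos.2 hε), neg_pos,
      iff_false_left hε.not_gt, not_lt]
    exact (map_unit_ne_zero φ (ε⁻¹ * η)).symm.le_iff_lt.symm
  · rw [mul_pos_iff_of_pos_left hε, iff_true_left hε]

theorem index_totPosUnits (F : Type*) [Field F] :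
    (totPosUnits F).index = Nat.card (unitSignatureGroup F) := by
  have hrel : QuotientGroup.leftRel (totPosUnits F) =
      Setoid.ker fun ε : (𝓞 F)ˣ => sgnVec F (algebraMap (𝓞 F) F ε) :=
    Setoid.ext fun _ _ => QuotientGroup.leftRel_apply.trans inv_mul_mem_totPosUnits_iff
  exact Nat.card_congr ((Quotient.congrRight (Setoid.ext_iff.1 hrel)).trans
    (Setoid.quotientKerEquivRange _))

end UnitSignature

end ArmitageFrohlich

/-- Let `K` be a number field of degree `n` with `r₁ > 0` real places.  Then the 2-rank `ρ`
of the class group of `K` satisfies `ρ ≥ ⌈r₁/2⌉ − sgnrk(E_K)`, equivalently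
`ρ ≥ dim_{𝔽₂}(E_K⁺/E_K²) − ⌊n/2⌋`, where `E_K⁺` is the group of totally positive units. -/
theorem classgroup_rank_lower_bound (r₁ ρ s d₂ : ℕ)
    (hr₁ : Nat.card (K →+* ℝ) = r₁)
    (hr₁pos : 0 < r₁)
    (hρ : Nat.card {c : ClassGroup (𝓞 K) // c ^ 2 = 1} = 2 ^ ρ)
    (hs : Nat.card (unitSignatureGroup K) = 2 ^ s)
    (hd₂ : Nat.card (totPosUnits K ⧸
      ((powMonoidHom 2 : (𝓞 K)ˣ →* (𝓞 K)ˣ).range).subgroupOf (totPosUnits K)) = 2 ^ d₂) :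
    (r₁ + 1) / 2 - s ≤ ρ ∧ d₂ - Module.finrank ℚ K / 2 ≤ ρ := by
  have hsq : (ArmitageFrohlich.squares (𝓞 K)ˣ).relIndex (totPosUnits K) = 2 ^ d₂ := hd₂
  have hd₂_le : d₂ * 2 ≤ Module.finrank ℚ K + ρ * 2 := by
    have h := ArmitageFrohlich.index_squares_totPosUnits_sq_le K
    rw [← Subgroup.relIndex, hsq, hρ, ← pow_mul, ← pow_mul, ← pow_add] at h
    exact (Nat.pow_le_pow_iff_right one_lt_two).1 h
  have hd₂_add : d₂ + s = Units.rank K + 1 := by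
    refine Nat.pow_right_injective le_rfl ?_
    change 2 ^ (d₂ + s) = 2 ^ (Units.rank K + 1)
    rw [← ArmitageFrohlich.index_squares_units,
      ← Subgroup.relIndex_mul_index ArmitageFrohlich.squares_le_totPosUnits,
      ArmitageFrohlich.index_totPosUnits, hsq, hs, pow_add]
  have hrank : Units.rank K = Fintype.card (InfinitePlace K) - 1 := rfl
  have hplaces := InfinitePlace.card_eq_nrRealPlaces_add_nrComplexPlaces K
  have hdegree := InfinitePlace.card_add_two_mul_card_eq_rank K
  rw [← ArmitageFrohlich.card_ringHom_real, hr₁] at hplaces hdegree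
  omega
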